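/- Let Γ be a (d−1)-dimensional simplicial complex on [n] satisfying the Link condition with respect to {i,j}, where 1 ≤ i < j ≤ n, and suppose dim C_Γ(ij) = d−1 and dim lk_Γ({i,j}) = d−3. If both C_Γ(ij) and lk_Γ({i,j}) have the strong Lefschetz property (over an infinite field K of arbitrary characteristic), then Γ has the strong Lefschetz property. -/

import Mathlib

/-! Combinatorics of simplicial complexes on subsets of ℕ (vertex set `[n] = Finset.Icc 1 n`). -/

/-- `Γ` is a simplicial complex on the vertex set `V`. -/
def SimplicialComplexOn (V : Finset ℕ) (Γ : Set (Finset ℕ)) : Prop :=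
  (∀ F ∈ Γ, F ⊆ V) ∧ (∀ v ∈ V, ({v} : Finset ℕ) ∈ Γ) ∧
    (∀ F ∈ Γ, ∀ G, G ⊆ F → G ∈ Γ)

/-- The dimension of a simplicial complex, as an integer (`dim Γ = max {|F| - 1 : F ∈ Γ}`). -/
noncomputable def sdim (Γ : Set (Finset ℕ)) : ℤ :=
  sSup ((fun F : Finset ℕ => (F.card : ℤ) - 1) '' Γ)

/-- A facet of `Γ` is a maximal face. -/
def IsFacet (Γ : Set (Finset ℕ)) (F : Finset ℕ) : Prop :=
  F ∈ Γ ∧ ∀ G ∈ Γ, F ⊆ G → F = G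

/-- A complex is pure if all of its facets have the same cardinality. -/
def PureComplex (Γ : Set (Finset ℕ)) : Prop :=
  ∀ F G, IsFacet Γ F → IsFacet Γ G → F.card = G.card

/-- `fvec Γ k` is the number of faces of `Γ` of cardinality `k`, i.e. `f_{k-1}(Γ)`. -/
noncomputable def fvec (Γ : Set (Finset ℕ)) (k : ℕ) : ℕ :=
  {F ∈ Γ | F.card = k}.ncard

/-- The `h`-vector of a `(d-1)`-dimensional complex:
`h_i = ∑_{j=0}^i (-1)^{i-j} binom(d-j, d-i) f_{j-1}`. -/
noncomputable def hvec (d : ℕ) (Γ : Set (Finset ℕ)) (i : ℕ) : ℤ :=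
  ∑ j ∈ Finset.range (i + 1),
    (-1 : ℤ) ^ (i - j) * (Nat.choose (d - j) (d - i) : ℤ) * (fvec Γ j : ℤ)

/-- The link of `Γ` with respect to a face `F`. -/
def linkOf (Γ : Set (Finset ℕ)) (F : Finset ℕ) : Set (Finset ℕ) :=
  {G | Disjoint G F ∧ G ∪ F ∈ Γ}

/-- The contraction of `Γ` with respect to `{i,j}`, identifying vertex `i` with `j`. -/
def contraction (Γ : Set (Finset ℕ)) (i j : ℕ) : Set (Finset ℕ) :=
  {F | F ∈ Γ ∧ i ∉ F} ∪ {G | ∃ F ∈ Γ, i ∈ F ∧ G = F.erase i ∪ {j}}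

/-- The Link condition: `lk_Γ({i}) ∩ lk_Γ({j}) = lk_Γ({i,j})`. -/
def LinkCondition (Γ : Set (Finset ℕ)) (i j : ℕ) : Prop :=
  linkOf Γ {i} ∩ linkOf Γ {j} = linkOf Γ {i, j}

open Classical in
/-- The shift operator `C_{ij}` on faces. -/
noncomputable def shiftMap (Γ : Set (Finset ℕ)) (i j : ℕ) (F : Finset ℕ) : Finset ℕ :=
  if i ∈ F ∧ j ∉ F ∧ F.erase i ∪ {j} ∉ Γ then F.erase i ∪ {j} else F

/-- `Shift_{ij}(Γ) = {C_{ij}(F) : F ∈ Γ}`. -/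
noncomputable def shiftComplex (Γ : Set (Finset ℕ)) (i j : ℕ) : Set (Finset ℕ) :=
  (shiftMap Γ i j) '' Γ

/-- The join `W * Σ = {F ∪ G : F ⊆ W, G ∈ Σ}` of a vertex set with a complex. -/
def joinW (W : Finset ℕ) (C : Set (Finset ℕ)) : Set (Finset ℕ) :=
  {H | ∃ F ⊆ W, ∃ G ∈ C, H = F ∪ G}

/-- Strong edge decomposability: boundaries of simplices and `{∅}` are strongly edge
decomposable, and recursively, a pure complex satisfying the Link condition w.r.t. an edge
`{i,j}` whose contraction and link are strongly edge decomposable is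
strongly edge decomposable. -/
inductive StronglyEdgeDecomposable : Set (Finset ℕ) → Prop
  | trivialComplex : StronglyEdgeDecomposable {(∅ : Finset ℕ)}
  | simplexBoundary (V : Finset ℕ) (hV : V.Nonempty) :
      StronglyEdgeDecomposable {F | F ⊆ V ∧ F ≠ V}
  | contract (Γ : Set (Finset ℕ)) (i j : ℕ) (hij : i < j)
      (hpure : PureComplex Γ) (hedge : ({i, j} : Finset ℕ) ∈ Γ)
      (hlc : LinkCondition Γ i j)
      (hcon : StronglyEdgeDecomposable (contraction Γ i j))
      (hlk : StronglyEdgeDecomposable (linkOf Γ {i, j})) :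
      StronglyEdgeDecomposable Γ

/-- A shifted complex: `F ∈ Γ`, `i ∈ F`, `i < j`, `j ∈ V` imply `(F \ {i}) ∪ {j} ∈ Γ`. -/
def ShiftedComplex (V : Finset ℕ) (Γ : Set (Finset ℕ)) : Prop :=
  ∀ F ∈ Γ, ∀ i ∈ F, ∀ j, i < j → j ∈ V → insert j (F.erase i) ∈ Γ

/-- A `d`-subset `F ⊆ [n]` is admissible if `n - k ∉ F` implies `[n-d+k, n-k-1] ⊆ F`. -/
def Admissible (n d : ℕ) (F : Finset ℕ) : Prop :=
  F ⊆ Finset.Icc 1 n ∧ F.card = d ∧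
    ∀ k < n, (n - k) ∉ F → Finset.Icc (n - d + k) (n - k - 1) ⊆ F

/-- `Δ(n,d)`, the complex generated by all admissible `d`-subsets of `[n]`; by a theorem of
Kalai this is the symmetric algebraic shifted complex `Δˢ(C(n,d))` of the boundary complex of
the cyclic `d`-polytope with `n` vertices. -/
def DeltaC (n d : ℕ) : Set (Finset ℕ) :=
  if d = 0 then {(∅ : Finset ℕ)} else {G | ∃ F, Admissible n d F ∧ G ⊆ F}

/-- The increasing enumeration of `V`, as a map `{1, …, |V|} → V ⊆ ℕ` (identity elsewhere). -/
noncomputable def vlabel (V : Finset ℕ) (i : ℕ) : ℕ :=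
  if h : i - 1 < V.card then (((V.orderIsoOfFin rfl) ⟨i - 1, h⟩ : V) : ℕ) else i

/-- `Δ(V,d)`: the complex `Δ(|V|,d)` relabeled order-isomorphically onto the vertex set `V`. -/
noncomputable def DeltaV (V : Finset ℕ) (d : ℕ) : Set (Finset ℕ) :=
  (fun G : Finset ℕ => G.image (vlabel V)) '' DeltaC V.card d
/-! Squeezed balls and spheres (Kalai). Monomials on `[m]` are represented as multisets. -/

/-- `U` is a shifted order ideal of monomials on `[m]`: it contains `1` and all variables
`x_1,…,x_m`, is closed under divisibility, and `u·x_i ∈ U`, `i < j ≤ m` imply `u·x_j ∈ U`.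
(A monomial is encoded as the multiset of its variable indices.) -/
def IsShiftedOrderIdeal (m : ℕ) (U : Set (Multiset ℕ)) : Prop :=
  (∀ u ∈ U, ∀ i ∈ u, i ∈ Finset.Icc 1 m) ∧ (0 : Multiset ℕ) ∈ U ∧
    (∀ i ∈ Finset.Icc 1 m, ({i} : Multiset ℕ) ∈ U) ∧
    (∀ u ∈ U, ∀ v, v ≤ u → v ∈ U) ∧
    (∀ u : Multiset ℕ, ∀ i j : ℕ, i < j → j ≤ m → (i ::ₘ u) ∈ U → (j ::ₘ u) ∈ U)

/-- For a monomial `u = x_{i_1}⋯x_{i_k}` (`i_1 ≤ … ≤ i_k`), the `(d+1)`-set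
`F_d(u) = {i_1, i_1+1} ∪ {i_2+2, i_2+3} ∪ ⋯ ∪ {i_k+2(k-1), i_k+2k-1} ∪ [n+2k-d, n]`. -/
noncomputable def Fd (n d : ℕ) (u : Multiset ℕ) : Finset ℕ :=
  (Finset.range (Multiset.card u)).biUnion
      (fun j => {(u.sort (· ≤ ·)).getD j 0 + 2 * j, (u.sort (· ≤ ·)).getD j 0 + 2 * j + 1}) ∪
    Finset.Icc (n + 2 * Multiset.card u - d) n

/-- The squeezed `d`-ball `B_d(U)`: the complex generated by `{F_d(u) : u ∈ U}`. -/
def squeezedBall (n d : ℕ) (U : Set (Multiset ℕ)) : Set (Finset ℕ) :=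
  {G | ∃ u ∈ U, G ⊆ Fd n d u}

/-- The boundary of a pure `d`-dimensional complex `B`: the subcomplex generated by the
`(d-1)`-dimensional faces (cardinality-`d` faces) contained in exactly one facet. -/
noncomputable def complexBoundary (d : ℕ) (B : Set (Finset ℕ)) : Set (Finset ℕ) :=
  {F | ∃ G, F ⊆ G ∧ G ∈ B ∧ G.card = d ∧
    {H | H ∈ B ∧ H.card = d + 1 ∧ G ⊆ H}.ncard = 1}

/-- The squeezed `(d-1)`-sphere `S_d(U) = ∂ B_d(U)`. -/
noncomputable def squeezedSphere (n d : ℕ) (U : Set (Multiset ℕ)) : Set (Finset ℕ) :=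
  complexBoundary d (squeezedBall n d U)

/-! The Stanley–Reisner ideal, the degree reverse lexicographic order, initial ideals and
generic initial ideals in the polynomial ring `K[x_1,…,x_n]`, realized as
`MvPolynomial (Fin n) K` with the variable `x_i` being `X ⟨i-1⟩`. -/

/-- The squarefree monomial `x_F = ∏_{i ∈ F} x_i` (variable `x_i`, `1 ≤ i ≤ n`, is `X ⟨i-1⟩`). -/
noncomputable def faceMonomial (K : Type*) [CommRing K] (n : ℕ) (F : Finset ℕ) :
    MvPolynomial (Fin n) K :=
  ∏ a ∈ Finset.univ.filter (fun a : Fin n => (a : ℕ) + 1 ∈ F), MvPolynomial.X a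

/-- The Stanley–Reisner ideal of a complex `Γ` on `[n]`, generated by the squarefree
monomials `x_F` with `F ⊆ [n]`, `F ∉ Γ`. -/
noncomputable def srIdeal (K : Type*) [CommRing K] (n : ℕ) (Γ : Set (Finset ℕ)) :
    Ideal (MvPolynomial (Fin n) K) :=
  Ideal.span {f | ∃ F : Finset ℕ, F ⊆ Finset.Icc 1 n ∧ F ∉ Γ ∧ f = faceMonomial K n F}

/-- The degree reverse lexicographic order (induced by `x_1 > x_2 > ⋯`, smaller index =
bigger variable): `u < v` iff `deg u < deg v`, or degrees agree and at the largest index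
where `u, v` differ, `u` has the larger exponent. -/
def DegRevLexLT {σ : Type*} [LinearOrder σ] (u v : σ →₀ ℕ) : Prop :=
  (u.sum fun _ e => e) < (v.sum fun _ e => e) ∨
    ((u.sum fun _ e => e) = (v.sum fun _ e => e) ∧
      ∃ k, v k < u k ∧ ∀ l, k < l → u l = v l)

/-- The initial ideal of `I` w.r.t. the degree reverse lexicographic order: the ideal
spanned by the leading monomials of the elements of `I`. -/
noncomputable def initialIdeal {σ : Type*} [LinearOrder σ] {K : Type*} [Field K]
    (I : Ideal (MvPolynomial σ K)) : Ideal (MvPolynomial σ K) :=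
  Ideal.span {m | ∃ f ∈ I, ∃ u ∈ f.support, m = MvPolynomial.monomial u (1 : K) ∧
    ∀ v ∈ f.support, v ≠ u → DegRevLexLT v u}

/-- The linear change of coordinates of `K[x_1,…,x_n]` associated with a matrix `M`,
`x_j ↦ ∑_i M_{ij} x_i`. -/
noncomputable def genLin {K : Type*} [CommRing K] {n : ℕ} (M : Matrix (Fin n) (Fin n) K) :
    MvPolynomial (Fin n) K →ₐ[K] MvPolynomial (Fin n) K :=
  MvPolynomial.aeval (fun j => ∑ a : Fin n, MvPolynomial.C (M a j) * MvPolynomial.X a)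

/-- `J` is the generic initial ideal (w.r.t. degrevlex) of `I`: there is a nonempty Zariski
open subset `U ⊆ GL_n(K)` (the nonvanishing locus of a nonzero polynomial in the matrix
entries) such that `in(φ(I)) = J` for every `φ ∈ U`. -/
def IsGin {K : Type*} [Field K] {n : ℕ} (I J : Ideal (MvPolynomial (Fin n) K)) : Prop :=
  ∃ p : MvPolynomial (Fin n × Fin n) K, p ≠ 0 ∧
    ∀ M : Matrix (Fin n) (Fin n) K, IsUnit M.det →
      MvPolynomial.eval (fun q => M q.1 q.2) p ≠ 0 →
      initialIdeal (Ideal.map (genLin M) I) = J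

/-- The set `G(J)` of (exponent vectors of) minimal monomial generators of a monomial
ideal `J`. -/
def minimalMonomialGens {σ : Type*} {K : Type*} [Field K] (J : Ideal (MvPolynomial σ K)) :
    Set (σ →₀ ℕ) :=
  {u | MvPolynomial.monomial u (1 : K) ∈ J ∧
    ∀ v : σ →₀ ℕ, v ≤ u → MvPolynomial.monomial v (1 : K) ∈ J → v = u}

/-- The squarefree operation `Φ` on exponent vectors:
`x_{i_1} x_{i_2} ⋯ x_{i_k} ↦ {i_1, i_2+1, …, i_k+k-1}` (`i_1 ≤ i_2 ≤ ⋯ ≤ i_k`). -/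
noncomputable def sqfreeOp {n : ℕ} (u : Fin n →₀ ℕ) : Finset ℕ :=
  (List.zipWith (· + ·)
      ((u.toMultiset.map (fun a : Fin n => (a : ℕ) + 1)).sort (· ≤ ·))
      (List.range (Multiset.card (u.toMultiset)))).toFinset

/-- `Δs` is the symmetric algebraic shifted complex of `Γ`: its Stanley–Reisner ideal is
`Φ(Gin(I_Γ))`, i.e. `Δs` consists of the `F ⊆ [n]` containing no `Φ(u)`, `u ∈ G(Gin(I_Γ))`. -/
def IsSymmetricShift (K : Type*) [Field K] (n : ℕ) (Γ Δs : Set (Finset ℕ)) : Prop :=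
  ∃ J : Ideal (MvPolynomial (Fin n) K), IsGin (srIdeal K n Γ) J ∧
    Δs = {F | F ⊆ Finset.Icc 1 n ∧ ∀ u ∈ minimalMonomialGens J, ¬ sqfreeOp u ⊆ F}

/-- The exponent vector (in `K[x_1,…,x_n]`) of a monomial given as a multiset. -/
noncomputable def multisetToExp (n : ℕ) (u : Multiset ℕ) : Fin n →₀ ℕ :=
  Finsupp.equivFunOnFinite.symm (fun a : Fin n => u.count ((a : ℕ) + 1))
/-! The exterior algebra `E = ⋀⟨e_1, e_2, …⟩` over `K`, exterior face ideals, the reverse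
lexicographic order, initial ideals and exterior algebraic shifting. We realize `E` as the
exterior algebra of the `K`-module `ℕ → K`, with `e_i` the image of `Pi.single i 1`. -/

/-- The exterior algebra `⋀ (ℕ → K)` hosting all the exterior face ideals. -/
abbrev ExtAlg (K : Type*) [Field K] := ExteriorAlgebra K (ℕ → K)

/-- The exterior monomial `e_F = e_{i_1} ∧ ⋯ ∧ e_{i_k}` for `F = {i_1 < ⋯ < i_k}`. -/
noncomputable def eMon (K : Type*) [Field K] (F : Finset ℕ) : ExtAlg K :=
  ((F.sort (· ≤ ·)).map (fun i => ExteriorAlgebra.ι K (Pi.single i (1 : K)))).prod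

/-- The exterior face ideal `J_Γ` of a complex `Γ` on the vertex set `V`, generated by the
monomials `e_F` with `F ⊆ V`, `F ∉ Γ`. -/
noncomputable def extFaceIdeal (K : Type*) [Field K] (V : Finset ℕ) (Γ : Set (Finset ℕ)) :
    Ideal (ExtAlg K) :=
  Ideal.span {x | ∃ F : Finset ℕ, F ⊆ V ∧ F ∉ Γ ∧ x = eMon K F}

/-- The alternating form computing the determinant of the coordinates indexed by `F`. -/
noncomputable def detCoeffAlt (K : Type*) [Field K] (F : Finset ℕ) :
    (ℕ → K) [⋀^Fin F.card]→ₗ[K] K :=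
  (Matrix.detRowAlternating).compLinearMap
    (LinearMap.funLeft K K (fun b : Fin F.card => ((F.orderIsoOfFin rfl b : F) : ℕ)))

/-- The coefficient functional of the basis monomial `e_F`: the linear functional on the
exterior algebra giving the coefficient of `e_F` in the monomial basis expansion. -/
noncomputable def extCoeff (K : Type*) [Field K] (F : Finset ℕ) : ExtAlg K →ₗ[K] K :=
  ExteriorAlgebra.liftAlternating
    (fun i => if h : i = F.card then (detCoeffAlt K F).domDomCongr (finCongr h.symm) else 0)

/-- The reverse lexicographic order (induced by `1 > 2 > ⋯`) on exterior monomials: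
`F < G` iff `|F| < |G|`, or the cardinalities agree and the largest element of the
symmetric difference `F Δ G` belongs to `F`. -/
def RevLexLT (F G : Finset ℕ) : Prop :=
  F.card < G.card ∨ (F.card = G.card ∧
    ∃ k, k ∈ F ∧ k ∉ G ∧ ∀ l, k < l → (l ∈ F ↔ l ∈ G))

/-- The initial ideal of an ideal `I` of the exterior algebra w.r.t. the reverse
lexicographic order: spanned by the leading monomials `e_F` of the elements of `I`. -/
noncomputable def extInitialIdeal (K : Type*) [Field K] (I : Ideal (ExtAlg K)) :
    Ideal (ExtAlg K) :=
  Ideal.span {x | ∃ y ∈ I, ∃ F : Finset ℕ, x = eMon K F ∧ extCoeff K F y ≠ 0 ∧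
    ∀ G : Finset ℕ, extCoeff K G y ≠ 0 → G ≠ F → RevLexLT G F}

/-- The linear change of coordinates of `span{e_i : i ∈ V}` (identity elsewhere)
associated with a `|V| × |V|` matrix `M`. -/
noncomputable def extLinMap (K : Type*) [Field K] (V : Finset ℕ)
    (M : Matrix (Fin V.card) (Fin V.card) K) : (ℕ → K) →ₗ[K] (ℕ → K) where
  toFun v k :=
    if h : k ∈ V then
      ∑ a : Fin V.card,
        M ((V.orderIsoOfFin rfl).symm ⟨k, h⟩) a * v ((V.orderIsoOfFin rfl a : V) : ℕ)
    else v k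
  map_add' x y := by
    funext k
    by_cases h : k ∈ V <;> simp [h, mul_add, Finset.sum_add_distrib]
  map_smul' c x := by
    funext k
    by_cases h : k ∈ V <;> simp [h, Finset.mul_sum, mul_left_comm]

/-- The algebra automorphism of the exterior algebra induced by `extLinMap`. -/
noncomputable def extAlgMap (K : Type*) [Field K] (V : Finset ℕ)
    (M : Matrix (Fin V.card) (Fin V.card) K) : ExtAlg K →ₐ[K] ExtAlg K :=
  ExteriorAlgebra.lift K ⟨(ExteriorAlgebra.ι K).comp (extLinMap K V M),
    fun _ => ExteriorAlgebra.ι_sq_zero _⟩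

/-- `Δe` is the exterior algebraic shifted complex of `Γ` (as complexes on the vertex set
`V`): `J_{Δe} = Gin(J_Γ)`, where the generic initial ideal is witnessed by a nonempty
Zariski open subset of `GL(V)` (the nonvanishing locus of a nonzero polynomial in the
matrix entries). -/
def IsExteriorShift (K : Type*) [Field K] (V : Finset ℕ) (Γ Δe : Set (Finset ℕ)) : Prop :=
  ∃ p : MvPolynomial (Fin V.card × Fin V.card) K, p ≠ 0 ∧
    ∀ M : Matrix (Fin V.card) (Fin V.card) K, IsUnit M.det →
      MvPolynomial.eval (fun q => M q.1 q.2) p ≠ 0 →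
      extInitialIdeal K (Ideal.map (extAlgMap K V M) (extFaceIdeal K V Γ)) =
        extFaceIdeal K V Δe

/-- The simplicial complex on `V` whose exterior face ideal is the (monomial) ideal `J`. -/
noncomputable def complexOfExtIdeal (K : Type*) [Field K] (V : Finset ℕ)
    (J : Ideal (ExtAlg K)) : Set (Finset ℕ) :=
  {F | F ⊆ V ∧ eMon K F ∉ J}

/-- Nongeneric exterior shifting `Δ_φ(Γ)`, defined by `J_{Δ_φ(Γ)} = in(φ(J_Γ))` for an
individual linear change of coordinates `φ` given by the matrix `M`. -/
noncomputable def DeltaPhi (K : Type*) [Field K] (V : Finset ℕ)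
    (M : Matrix (Fin V.card) (Fin V.card) K) (Γ : Set (Finset ℕ)) : Set (Finset ℕ) :=
  complexOfExtIdeal K V (extInitialIdeal K (Ideal.map (extAlgMap K V M) (extFaceIdeal K V Γ)))

/-- The shifting-theoretic upper bound relation for a `(d-1)`-dimensional complex `Γ` on the
vertex set `V`: `Δᵉ(Γ) ⊆ Δ(V,d)`. -/
def ShiftingUBR (K : Type*) [Field K] (V : Finset ℕ) (d : ℕ) (Γ : Set (Finset ℕ)) : Prop :=
  ∀ Δe, IsExteriorShift K V Γ Δe → Δe ⊆ DeltaV V d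
/-! Graded pieces, linear systems of parameters, the Cohen–Macaulay property and the strong
Lefschetz property for graded quotients `A = K[x_1,…,x_n]/I`. -/

/-- The degree-`k` homogeneous component of the graded quotient `S/I` (the image of the
degree-`k` homogeneous polynomials). -/
noncomputable def quotPiece {K : Type*} [Field K] {n : ℕ}
    (I : Ideal (MvPolynomial (Fin n) K)) (k : ℕ) :
    Submodule K (MvPolynomial (Fin n) K ⧸ I) :=
  (MvPolynomial.homogeneousSubmodule (Fin n) K k).map (Ideal.Quotient.mkₐ K I).toLinearMap

/-- `θ_1, …, θ_d` is a linear system of parameters of `S/I`: the `θ_a` are linear forms and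
the quotient `S/(I + (θ_1,…,θ_d))` has Krull dimension `≤ 0`. -/
def IsLSOP {K : Type*} [Field K] {n : ℕ} (I : Ideal (MvPolynomial (Fin n) K)) (d : ℕ)
    (θ : Fin d → MvPolynomial (Fin n) K) : Prop :=
  (∀ a, (θ a).IsHomogeneous 1) ∧
    ringKrullDim (MvPolynomial (Fin n) K ⧸ (I ⊔ Ideal.span (Set.range θ))) ≤ 0

set_option synthInstance.maxHeartbeats 1000000 in
/-- The graded quotient `A = S/I` is Cohen–Macaulay: a linear system of parameters of
length `d = dim A` forms a regular `A`-sequence. -/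
def IsCMIdeal {K : Type*} [Field K] {n : ℕ} (I : Ideal (MvPolynomial (Fin n) K)) : Prop :=
  ∃ d : ℕ, ringKrullDim (MvPolynomial (Fin n) K ⧸ I) = d ∧
    ∃ θ : Fin d → MvPolynomial (Fin n) K, IsLSOP I d θ ∧
      RingTheory.Sequence.IsRegular (MvPolynomial (Fin n) K ⧸ I)
        ((List.ofFn θ).map (⇑(Ideal.Quotient.mk I)))

/-- The graded quotient `A = S/I` has the strong Lefschetz property: `A` is Cohen–Macaulay
and there are an l.s.o.p. `θ_1, …, θ_d` (`d = dim A`) and a linear form `ω` such that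
`ω^{s-2i} : (A/θA)_i → (A/θA)_{s-i}` is bijective for `0 ≤ i ≤ s/2`, where
`s = max{k : (A/θA)_k ≠ 0}`. -/
def HasSLPIdeal {K : Type*} [Field K] {n : ℕ} (I : Ideal (MvPolynomial (Fin n) K)) : Prop :=
  IsCMIdeal I ∧
    ∃ d : ℕ, ringKrullDim (MvPolynomial (Fin n) K ⧸ I) = d ∧
      ∃ θ : Fin d → MvPolynomial (Fin n) K, IsLSOP I d θ ∧
        ∃ ω : MvPolynomial (Fin n) K, ω.IsHomogeneous 1 ∧
          ∃ s : ℕ,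
            (quotPiece (I ⊔ Ideal.span (Set.range θ)) s ≠ ⊥ ∧
              ∀ k, s < k → quotPiece (I ⊔ Ideal.span (Set.range θ)) k = ⊥) ∧
            ∀ i : ℕ, 2 * i ≤ s →
              Set.BijOn
                (fun x => (Ideal.Quotient.mk (I ⊔ Ideal.span (Set.range θ)) ω) ^ (s - 2 * i) * x)
                (quotPiece (I ⊔ Ideal.span (Set.range θ)) i)
                (quotPiece (I ⊔ Ideal.span (Set.range θ)) (s - i))

/-- A simplicial complex is Cohen–Macaulay over `K` if its Stanley–Reisner ring is. -/
def ComplexCM (K : Type*) [Field K] (n : ℕ) (Γ : Set (Finset ℕ)) : Prop :=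
  IsCMIdeal (srIdeal K n Γ)

/-- A `(d-1)`-dimensional complex `Γ` has the strong Lefschetz property if `h_d(Γ) > 0` and
its Stanley–Reisner ring has the strong Lefschetz property. -/
def ComplexSLP (K : Type*) [Field K] (n d : ℕ) (Γ : Set (Finset ℕ)) : Prop :=
  0 < hvec d Γ d ∧ HasSLPIdeal (srIdeal K n Γ)

/-- A `1`-dimensional simplicial sphere (a cycle): a complex all of whose faces are edges or
smaller, every vertex lying in exactly two edges, whose edge graph is connected. -/
def IsCycleComplex (V : Finset ℕ) (Γ : Set (Finset ℕ)) : Prop :=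
  SimplicialComplexOn V Γ ∧ (∀ F ∈ Γ, F.card ≤ 2) ∧
    (∀ v ∈ V, {e | e ∈ Γ ∧ e.card = 2 ∧ v ∈ e}.ncard = 2) ∧
    ∀ u ∈ V, ∀ v ∈ V,
      Relation.ReflTransGen (fun a b : ℕ => ({a, b} : Finset ℕ) ∈ Γ) u v

/-!
Everything is read off from Hilbert functions. Killing a linear form at most divides the Hilbert
series by `1 / (1 - X)`, with equality for nonzerodivisors, so a sequence of `d` linear forms is
regular on `S/I` iff the Hilbert function of `S/I` is the `d`-fold partial sum of that of the
quotient. As Hilbert functions are upper semicontinuous in polynomial families of ideals, parameters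
and Lefschetz elements over an infinite field may be chosen generically, in particular for two
ideals at once, and they survive from a special member of a family to a general one.

In the coordinates `x_i ↦ t x_i`, `x_j ↦ x_i + x_j` the ideal `I_Γ` degenerates, as `t → 0` and
under the Link condition, to the ideal of `Δ = Shift_ij(Γ)`, which has the same `f`-vector. Deleting
`i` from `Δ` leaves `C_Γ(ij)`, while `I_Δ : x_i` is the ideal of the double cone over
`lk_Γ({i,j})`. In `0 → S/(I_Δ : x_i)(-1) → S/I_Δ → S/(I_Δ + x_i) → 0` the outer terms have socle
degrees `d - 2` and `d`, hence symmetric centres, so their Lefschetz properties give that of `Δ`,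
and semicontinuity carries it over to `Γ`.
-/

attribute [local instance] MvPolynomial.gradedAlgebra

section HilbertFunction

open MvPolynomial

lemma homogeneousComponent_mul_of_isHomogeneous {σ R : Type*} [CommSemiring R]
    {g : MvPolynomial σ R} {e : ℕ} (hg : g.IsHomogeneous e) (f : MvPolynomial σ R) (k : ℕ) :
    homogeneousComponent k (f * g) =
      if e ≤ k then homogeneousComponent (k - e) f * g else 0 := by
  simp only [← decomposition.decompose'_apply]
  exact DirectSum.coe_decompose_mul_of_right_mem (homogeneousSubmodule σ R) k hg

lemma mem_of_homogeneousComponent_mem {σ R : Type*} [CommSemiring R] {I : Ideal (MvPolynomial σ R)}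
    {f : MvPolynomial σ R} (h : ∀ k, homogeneousComponent k f ∈ I) : f ∈ I := by
  rw [← sum_homogeneousComponent f]
  exact Ideal.sum_mem _ fun k _ => h k

lemma isHomogeneous_span_singleton {σ R : Type*} [CommRing R] {x : MvPolynomial σ R} {e : ℕ}
    (hx : x.IsHomogeneous e) : (Ideal.span {x}).IsHomogeneous (homogeneousSubmodule σ R) :=
  Ideal.homogeneous_span _ _ fun _ hy => ⟨e, Set.mem_singleton_iff.1 hy ▸ hx⟩

lemma isHomogeneous_colon_singleton {σ R : Type*} [CommRing R] {I : Ideal (MvPolynomial σ R)}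
    (hI : I.IsHomogeneous (homogeneousSubmodule σ R)) {x : MvPolynomial σ R} {e : ℕ}
    (hx : x.IsHomogeneous e) : (I.colon {x}).IsHomogeneous (homogeneousSubmodule σ R) := by
  intro k f hf
  rw [Submodule.mem_colon_singleton, smul_eq_mul] at hf ⊢
  have h := homogeneousComponent_mem_of_mem hI hf (k + e)
  rw [homogeneousComponent_mul_of_isHomogeneous hx, if_pos (Nat.le_add_left e k),
    Nat.add_sub_cancel, ← decomposition.decompose'_apply] at h
  exact h

variable {σ K : Type*} [Field K]

/-- The homogeneous polynomials of degree `k` in the ideal `I`. -/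
noncomputable def degPart (I : Ideal (MvPolynomial σ K)) (k : ℕ) : Submodule K (MvPolynomial σ K) :=
  I.restrictScalars K ⊓ homogeneousSubmodule σ K k

/-- The Hilbert function `k ↦ dim_K (S/I)_k` of the quotient of `S = K[x_a : a ∈ σ]` by `I`; for
`σ = Fin n` the graded piece is `quotPiece I k`. -/
noncomputable def hilb (I : Ideal (MvPolynomial σ K)) (k : ℕ) : ℕ :=
  Module.finrank K ((homogeneousSubmodule σ K k).map (Ideal.Quotient.mkₐ K I).toLinearMap)

lemma mem_degPart {I : Ideal (MvPolynomial σ K)} {k : ℕ} {f : MvPolynomial σ K} :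
    f ∈ degPart I k ↔ f ∈ I ∧ f.IsHomogeneous k := Iff.rfl

lemma degPart_mono {I J : Ideal (MvPolynomial σ K)} (h : I ≤ J) (k : ℕ) :
    degPart I k ≤ degPart J k := fun _ hf => ⟨h hf.1, hf.2⟩

lemma hilb_top (k : ℕ) : hilb (⊤ : Ideal (MvPolynomial σ K)) k = 0 := by
  have : Subsingleton (MvPolynomial σ K ⧸ (⊤ : Ideal (MvPolynomial σ K))) :=
    Ideal.Quotient.subsingleton_iff.2 rfl
  exact Module.finrank_zero_of_subsingleton

lemma degPart_sup_span_singleton {I : Ideal (MvPolynomial σ K)}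
    (hI : I.IsHomogeneous (homogeneousSubmodule σ K)) {x : MvPolynomial σ K} {e : ℕ}
    (hx : x.IsHomogeneous e) (k : ℕ) :
    degPart (I ⊔ Ideal.span {x}) (k + e) =
      degPart I (k + e) ⊔ (homogeneousSubmodule σ K k).map (LinearMap.mulRight K x) := by
  apply le_antisymm
  · rintro f ⟨hfI, hf⟩
    obtain ⟨a, ha, b, hb, rfl⟩ := Submodule.mem_sup.1 hfI
    obtain ⟨c, rfl⟩ := Ideal.mem_span_singleton'.1 hb
    rw [← homogeneousComponent_eq_self hf, map_add,
      homogeneousComponent_mul_of_isHomogeneous hx, if_pos (Nat.le_add_left e k),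
      Nat.add_sub_cancel]
    exact Submodule.add_mem_sup
      ⟨homogeneousComponent_mem_of_mem hI ha _, homogeneousComponent_isHomogeneous _ _⟩
      ⟨_, homogeneousComponent_isHomogeneous k c, rfl⟩
  · refine sup_le (degPart_mono le_sup_left _) ?_
    rintro _ ⟨c, hc, rfl⟩
    exact ⟨Ideal.mem_sup_right (Ideal.mul_mem_left _ c (Ideal.mem_span_singleton_self x)),
      hc.mul hx⟩

lemma degPart_inf_map_mulRight (I : Ideal (MvPolynomial σ K)) {x : MvPolynomial σ K} {e : ℕ}
    (hx : x.IsHomogeneous e) (k : ℕ) :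
    degPart I (k + e) ⊓ (homogeneousSubmodule σ K k).map (LinearMap.mulRight K x) =
      (degPart (I.colon {x}) k).map (LinearMap.mulRight K x) := by
  apply le_antisymm
  · rintro _ ⟨hI, c, hc, rfl⟩
    exact ⟨c, ⟨Submodule.mem_colon_singleton.2 hI.1, hc⟩, rfl⟩
  · rintro _ ⟨c, ⟨hcI, hc⟩, rfl⟩
    exact ⟨⟨Submodule.mem_colon_singleton.1 hcI, hc.mul hx⟩, c, hc, rfl⟩

variable [Finite σ]

instance finite_homogeneousSubmodule (k : ℕ) : Module.Finite K (homogeneousSubmodule σ K k) :=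
  Module.Finite.iff_fg.2 (homogeneousSubmodule_fg (σ := σ) (R := K) k)

instance finite_degPart (I : Ideal (MvPolynomial σ K)) (k : ℕ) : Module.Finite K (degPart I k) :=
  Submodule.finiteDimensional_of_le inf_le_right

lemma hilb_add_finrank_degPart (I : Ideal (MvPolynomial σ K)) (k : ℕ) :
    hilb I k + Module.finrank K (degPart I k) =
      Module.finrank K (homogeneousSubmodule σ K k) := by
  have h := ((Ideal.Quotient.mkₐ K I).toLinearMap.domRestrict
    (homogeneousSubmodule σ K k)).finrank_range_add_finrank_ker
  rw [LinearMap.range_domRestrict, LinearMap.ker_domRestrict] at h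
  have hker : degPart I k = ((LinearMap.ker (Ideal.Quotient.mkₐ K I).toLinearMap).submoduleOf
      (homogeneousSubmodule σ K k)).map (Submodule.subtype _) := by
    ext f
    simp [mem_degPart, Submodule.submoduleOf, Ideal.Quotient.eq_zero_iff_mem, and_comm]
  rw [← h, hilb, hker]
  congr 1
  exact (Submodule.equivMapOfInjective _ Subtype.val_injective _).finrank_eq.symm

lemma hilb_le_hilb_iff_finrank_degPart_le {I J : Ideal (MvPolynomial σ K)} {k : ℕ} :
    hilb J k ≤ hilb I k ↔ Module.finrank K (degPart I k) ≤ Module.finrank K (degPart J k) := by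
  have hI := hilb_add_finrank_degPart I k
  have hJ := hilb_add_finrank_degPart J k
  omega

lemma hilb_le_of_degPart_le {I J : Ideal (MvPolynomial σ K)} {k : ℕ}
    (h : degPart I k ≤ degPart J k) : hilb J k ≤ hilb I k :=
  hilb_le_hilb_iff_finrank_degPart_le.2 (Submodule.finrank_mono h)

lemma hilb_anti {I J : Ideal (MvPolynomial σ K)} (h : I ≤ J) : hilb J ≤ hilb I :=
  fun k => hilb_le_of_degPart_le (degPart_mono h k)

lemma degPart_eq_of_hilb_le {I J : Ideal (MvPolynomial σ K)} {k : ℕ} (hIJ : I ≤ J)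
    (h : hilb I k ≤ hilb J k) : degPart I k = degPart J k :=
  Submodule.eq_of_le_of_finrank_le (degPart_mono hIJ k) (hilb_le_hilb_iff_finrank_degPart_le.1 h)

lemma hilb_eq_zero_iff {I : Ideal (MvPolynomial σ K)} {k : ℕ} :
    hilb I k = 0 ↔ ∀ f, f.IsHomogeneous k → f ∈ I := by
  constructor
  · intro h f hf
    have hmem : f ∈ degPart ⊤ k := ⟨Submodule.mem_top, hf⟩
    rw [← degPart_eq_of_hilb_le (le_top (a := I)) (h ▸ Nat.zero_le _)] at hmem
    exact hmem.1
  · intro h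
    rw [← Nat.le_zero, ← hilb_top (σ := σ) (K := K) k]
    exact hilb_le_of_degPart_le fun f hf => ⟨h f hf.2, hf.2⟩

lemma hilb_eq_zero_of_le {I : Ideal (MvPolynomial σ K)} {k l : ℕ} (h : hilb I k = 0)
    (hkl : k ≤ l) : hilb I l = 0 := by
  rw [hilb_eq_zero_iff] at h ⊢
  intro f hf
  have hf' : f ∈ homogeneousSubmodule σ K k * homogeneousSubmodule σ K (l - k) := by
    rw [← homogeneousSubmodule_one_pow (R := K) (σ := σ) (n := k),
      ← homogeneousSubmodule_one_pow (R := K) (σ := σ) (n := l - k), ← pow_add,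
      Nat.add_sub_cancel' hkl, homogeneousSubmodule_one_pow]
    exact hf
  exact Submodule.mul_induction_on hf' (fun a ha b _ => I.mul_mem_right b (h a ha))
    fun _ _ => I.add_mem

lemma hilb_sup_span_singleton_of_lt {I : Ideal (MvPolynomial σ K)}
    (hI : I.IsHomogeneous (homogeneousSubmodule σ K)) {x : MvPolynomial σ K} {e : ℕ}
    (hx : x.IsHomogeneous e) {k : ℕ} (hk : k < e) :
    hilb (I ⊔ Ideal.span {x}) k = hilb I k := by
  refine le_antisymm (hilb_anti le_sup_left k) (hilb_le_of_degPart_le ?_)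
  rintro f ⟨hfI, hf⟩
  obtain ⟨a, ha, b, hb, rfl⟩ := Submodule.mem_sup.1 hfI
  obtain ⟨c, rfl⟩ := Ideal.mem_span_singleton'.1 hb
  rw [← homogeneousComponent_eq_self hf, map_add,
    homogeneousComponent_mul_of_isHomogeneous hx, if_neg hk.not_ge, add_zero]
  exact ⟨homogeneousComponent_mem_of_mem hI ha k, homogeneousComponent_isHomogeneous _ _⟩

-- The exact sequence `0 → S/(I : x)(-e) → S/I → S/(I + (x)) → 0`.
lemma hilb_add_eq {I : Ideal (MvPolynomial σ K)}
    (hI : I.IsHomogeneous (homogeneousSubmodule σ K)) {x : MvPolynomial σ K} {e : ℕ}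
    (hx : x.IsHomogeneous e) (k : ℕ) :
    hilb I (k + e) = hilb (I ⊔ Ideal.span {x}) (k + e) + hilb (I.colon {x}) k := by
  by_cases hx0 : x = 0
  · rw [hx0, Submodule.colon_singleton_zero, hilb_top, Ideal.span_singleton_eq_bot.2 rfl,
      sup_bot_eq, add_zero]
  have hinj : Function.Injective (LinearMap.mulRight K x) := mul_left_injective₀ hx0
  have hdim := Submodule.finrank_sup_add_finrank_inf_eq (degPart I (k + e))
    ((homogeneousSubmodule σ K k).map (LinearMap.mulRight K x))
  rw [← degPart_sup_span_singleton hI hx, degPart_inf_map_mulRight I hx,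
    ← (Submodule.equivMapOfInjective _ hinj _).finrank_eq,
    ← (Submodule.equivMapOfInjective _ hinj _).finrank_eq] at hdim
  have hI := hilb_add_finrank_degPart I (k + e)
  have hsup := hilb_add_finrank_degPart (I ⊔ Ideal.span {x}) (k + e)
  have hcolon := hilb_add_finrank_degPart (I.colon {x}) k
  omega

end HilbertFunction

section Semicontinuity

open MvPolynomial Filter

lemma exists_polynomial_eval_eq {K A : Type*} [CommRing K] [CommRing A] [Algebra K A]
    (φ : A →ₗ[K] K) (Q : Polynomial A) :
    ∃ p : Polynomial K, ∀ t, p.eval t = φ (Q.eval (algebraMap K A t)) := by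
  induction Q using Polynomial.induction_on' with
  | add Q₁ Q₂ h₁ h₂ =>
    obtain ⟨p₁, hp₁⟩ := h₁
    obtain ⟨p₂, hp₂⟩ := h₂
    exact ⟨p₁ + p₂, fun t => by rw [Polynomial.eval_add, hp₁, hp₂, Polynomial.eval_add, map_add]⟩
  | monomial m a =>
    refine ⟨Polynomial.monomial m (φ a), fun t => ?_⟩
    rw [Polynomial.eval_monomial, Polynomial.eval_monomial, ← map_pow, mul_comm a,
      ← Algebra.smul_def, map_smul, smul_eq_mul, mul_comm]

lemma eventually_eval_ne_zero {K : Type*} [CommRing K] [IsDomain K] {p : Polynomial K}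
    (hp : p ≠ 0) : ∀ᶠ t in cofinite, p.eval t ≠ 0 := by
  simpa [eventually_cofinite] using Polynomial.finite_setOfPred_isRoot hp

lemma linearIndependent_of_det_ne_zero {ι K M : Type*} [Fintype ι] [DecidableEq ι] [Field K]
    [AddCommGroup M] [Module K M] {v : ι → M} (φ : ι → M →ₗ[K] K)
    (h : (Matrix.of fun a b => φ a (v b)).det ≠ 0) : LinearIndependent K v :=
  LinearIndependent.of_comp (LinearMap.pi φ) (Matrix.linearIndependent_cols_of_det_ne_zero h)

lemma exists_dual_eq_single {ι K M : Type*} [Finite ι] [DecidableEq ι] [Field K]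
    [AddCommGroup M] [Module K M] {v : ι → M} (h : LinearIndependent K v) :
    ∃ φ : ι → M →ₗ[K] K, Matrix.of (fun a b => φ a (v b)) = 1 := by
  have := Fintype.ofFinite ι
  obtain ⟨g, hg⟩ := LinearMap.exists_leftInverse_of_injective _
    (LinearMap.ker_eq_bot.2 (linearIndependent_iff_injective_fintypeLinearCombination.1 h))
  refine ⟨fun a => LinearMap.proj a ∘ₗ g, Matrix.ext fun a b => ?_⟩
  have hgv := congrFun (LinearMap.congr_fun hg (Pi.single b 1)) a
  simpa [Fintype.linearCombination_apply_single, Matrix.one_apply, Pi.single_apply] using hgv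

lemma eventually_linearIndependent_eval {ι K A : Type*} [Finite ι] [Field K] [CommRing A]
    [Algebra K A] {Q : ι → Polynomial A} (h : LinearIndependent K fun i => (Q i).eval 0) :
    ∀ᶠ t in cofinite, LinearIndependent K fun i => (Q i).eval (algebraMap K A t) := by
  classical
  have := Fintype.ofFinite ι
  obtain ⟨φ, hφ⟩ := exists_dual_eq_single h
  choose p hp using fun a b => exists_polynomial_eval_eq (φ a) (Q b)
  have hdet (t : K) : (Matrix.of p).det.eval t =
      (Matrix.of fun a b => φ a ((Q b).eval (algebraMap K A t))).det := by
    rw [← Polynomial.coe_evalRingHom, RingHom.map_det]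
    exact congrArg Matrix.det (Matrix.ext fun a b => hp a b t)
  have hne : (Matrix.of p).det ≠ 0 := fun h0 => by
    simpa [h0, hφ] using hdet 0
  filter_upwards [eventually_eval_ne_zero hne] with t ht
  exact linearIndependent_of_det_ne_zero φ (hdet t ▸ ht)

variable {σ K : Type*} [Field K]

/-- A polynomial family `Q = ∑ Q_m t^m` of forms of degree `e`: each `Q_m` is one. -/
def IsHomFamily (e : ℕ) (Q : Polynomial (MvPolynomial σ K)) : Prop :=
  ∀ m, (Q.coeff m).IsHomogeneous e

lemma IsHomFamily.eval {e : ℕ} {Q : Polynomial (MvPolynomial σ K)} (hQ : IsHomFamily e Q)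
    (t : K) : (Q.eval (C t)).IsHomogeneous e := by
  rw [Polynomial.eval_eq_sum]
  refine IsHomogeneous.sum _ _ _ fun m _ => ?_
  change (Q.coeff m * C t ^ m).IsHomogeneous e
  rw [← map_pow, mul_comm]
  exact (hQ m).C_mul _

lemma IsHomFamily.const {e : ℕ} {p : MvPolynomial σ K} (hp : p.IsHomogeneous e) :
    IsHomFamily e (Polynomial.C p) := by
  intro m
  rw [Polynomial.coeff_C]
  split_ifs
  exacts [hp, isHomogeneous_zero _ _ _]

lemma IsHomFamily.add {e : ℕ} {P Q : Polynomial (MvPolynomial σ K)}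
    (hP : IsHomFamily e P) (hQ : IsHomFamily e Q) : IsHomFamily e (P + Q) := by
  intro m
  rw [Polynomial.coeff_add]
  exact (hP m).add (hQ m)

lemma IsHomFamily.X_mul {e : ℕ} {Q : Polynomial (MvPolynomial σ K)}
    (hQ : IsHomFamily e Q) : IsHomFamily e (Polynomial.X * Q) := by
  rintro (_ | m)
  · rw [Polynomial.mul_coeff_zero, Polynomial.coeff_X_zero, zero_mul]
    exact isHomogeneous_zero _ _ _
  · rw [Polynomial.coeff_X_mul]
    exact hQ m

lemma IsHomFamily.mul {e e' : ℕ} {P Q : Polynomial (MvPolynomial σ K)}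
    (hP : IsHomFamily e P) (hQ : IsHomFamily e' Q) : IsHomFamily (e + e') (P * Q) := by
  intro m
  rw [Polynomial.coeff_mul]
  exact IsHomogeneous.sum _ _ _ fun x _ => (hP _).mul (hQ _)

lemma IsHomFamily.pow {e : ℕ} {Q : Polynomial (MvPolynomial σ K)}
    (hQ : IsHomFamily e Q) (m : ℕ) : IsHomFamily (e * m) (Q ^ m) := by
  induction m with
  | zero => simpa using IsHomFamily.const (isHomogeneous_one σ K)
  | succ m ih => rw [pow_succ, mul_add_one]; exact ih.mul hQ

/-- The ideal generated by the members at `t` of a set of polynomial families. -/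
noncomputable def familyIdeal (𝒬 : Set (Polynomial (MvPolynomial σ K))) (t : K) :
    Ideal (MvPolynomial σ K) :=
  Ideal.span ((fun Q => Q.eval (C t)) '' 𝒬)

/-- The families of degree `k` obtained from those in `𝒬` on multiplying by a polynomial that does
not depend on `t`. -/
def multiplesOfDegree (𝒬 : Set (Polynomial (MvPolynomial σ K))) (k : ℕ) :
    Set (Polynomial (MvPolynomial σ K)) :=
  {P | IsHomFamily k P ∧ ∃ Q ∈ 𝒬, ∃ u, P = Polynomial.C u * Q}

lemma eval_mem_degPart_familyIdeal {𝒬 : Set (Polynomial (MvPolynomial σ K))} {k : ℕ}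
    {P : Polynomial (MvPolynomial σ K)} (hP : P ∈ multiplesOfDegree 𝒬 k) (t : K) :
    P.eval (C t) ∈ degPart (familyIdeal 𝒬 t) k := by
  obtain ⟨hhom, Q, hQ, u, rfl⟩ := hP
  refine ⟨?_, hhom.eval t⟩
  rw [Polynomial.eval_mul, Polynomial.eval_C]
  exact Ideal.mul_mem_left _ u (Ideal.subset_span ⟨Q, hQ, rfl⟩)

lemma degPart_familyIdeal {𝒬 : Set (Polynomial (MvPolynomial σ K))}
    (h𝒬 : ∀ Q ∈ 𝒬, ∃ e, IsHomFamily e Q) (k : ℕ) (t : K) :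
    degPart (familyIdeal 𝒬 t) k =
      Submodule.span K ((fun P => P.eval (C t)) '' multiplesOfDegree 𝒬 k) := by
  refine le_antisymm ?_ (Submodule.span_le.2 ?_)
  · rintro f ⟨hfI, hf⟩
    obtain ⟨c, hc, rfl⟩ := Submodule.mem_span_set.1 hfI
    rw [← homogeneousComponent_eq_self hf, Finsupp.sum, map_sum]
    refine Submodule.sum_mem _ fun g hg => ?_
    obtain ⟨Q, hQ, rfl⟩ := hc hg
    obtain ⟨e, he⟩ := h𝒬 Q hQ
    rw [smul_eq_mul, homogeneousComponent_mul_of_isHomogeneous (he.eval t)]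
    split_ifs with hek
    · set u := homogeneousComponent (k - e) (c (Q.eval (C t))) with hu
      have hu' : u.IsHomogeneous (k - e) := homogeneousComponent_isHomogeneous _ _
      have hP := (IsHomFamily.const hu').mul he
      rw [Nat.sub_add_cancel hek] at hP
      exact Submodule.subset_span ⟨Polynomial.C u * Q, ⟨hP, Q, hQ, u, rfl⟩, by simp [hu]⟩
    · exact Submodule.zero_mem _
  · rintro _ ⟨P, hP, rfl⟩
    exact eval_mem_degPart_familyIdeal hP t

-- Upper semicontinuity: a basis of the degree `k` part of the special ideal deforms to linearly
-- independent elements of the nearby ones.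
lemma eventually_hilb_familyIdeal_le [Finite σ] {𝒬 : Set (Polynomial (MvPolynomial σ K))}
    (h𝒬 : ∀ Q ∈ 𝒬, ∃ e, IsHomFamily e Q) (k : ℕ) :
    ∀ᶠ t in cofinite, hilb (familyIdeal 𝒬 t) k ≤ hilb (familyIdeal 𝒬 0) k := by
  have hspan := degPart_familyIdeal h𝒬 k 0
  have hfin : Module.Finite K (Submodule.span K
      ((fun P => P.eval (C (0 : K))) '' multiplesOfDegree 𝒬 k)) :=
    hspan ▸ finite_degPart _ k
  obtain ⟨f, hf, -, hli⟩ := Submodule.exists_fun_fin_finrank_span_eq K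
    ((fun P => P.eval (C (0 : K))) '' multiplesOfDegree 𝒬 k)
  choose P hP hPf using hf
  obtain rfl : (fun i => (P i).eval 0) = f := funext fun i => by simpa using hPf i
  filter_upwards [eventually_linearIndependent_eval hli] with t ht
  rw [hilb_le_hilb_iff_finrank_degPart_le, hspan]
  have hli_t : LinearIndependent K fun i =>
      (⟨(P i).eval (C t), eval_mem_degPart_familyIdeal (hP i) t⟩ : degPart (familyIdeal 𝒬 t) k) :=
    LinearIndependent.of_comp (Submodule.subtype _) ht
  simpa using hli_t.fintype_card_le_finrank

lemma eventually_hilb_sup_familyIdeal_le [Finite σ] {I : Ideal (MvPolynomial σ K)}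
    (hI : I.IsHomogeneous (homogeneousSubmodule σ K))
    {𝒬 : Set (Polynomial (MvPolynomial σ K))} (h𝒬 : ∀ Q ∈ 𝒬, ∃ e, IsHomFamily e Q) (k : ℕ) :
    ∀ᶠ t in cofinite, hilb (I ⊔ familyIdeal 𝒬 t) k ≤ hilb (I ⊔ familyIdeal 𝒬 0) k := by
  obtain ⟨S, rfl⟩ := (Ideal.IsHomogeneous.iff_exists _ I).1 hI
  have hconst (t : K) : Ideal.span (Subtype.val '' S) ⊔ familyIdeal 𝒬 t =
      familyIdeal (Polynomial.C '' (Subtype.val '' S) ∪ 𝒬) t := by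
    simp [familyIdeal, Set.image_union, Submodule.span_union, Set.image_image]
  simp_rw [hconst]
  refine eventually_hilb_familyIdeal_le ?_ k
  rintro _ (⟨_, ⟨⟨f, e, he⟩, -, rfl⟩, rfl⟩ | hQ)
  exacts [⟨e, IsHomFamily.const he⟩, h𝒬 _ hQ]

lemma eventually_hilb_sup_span_eval_le [Finite σ] {I : Ideal (MvPolynomial σ K)}
    (hI : I.IsHomogeneous (homogeneousSubmodule σ K)) {Q : Polynomial (MvPolynomial σ K)} {e : ℕ}
    (hQ : IsHomFamily e Q) (k : ℕ) :
    ∀ᶠ t in cofinite,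
      hilb (I ⊔ Ideal.span {Q.eval (C t)}) k ≤ hilb (I ⊔ Ideal.span {Q.eval 0}) k := by
  simpa [familyIdeal] using
    eventually_hilb_sup_familyIdeal_le hI (𝒬 := {Q}) (fun _ h => ⟨e, h ▸ hQ⟩) k

end Semicontinuity

section Sequences

/-- The operator of partial sums on sequences. It relates the Hilbert functions of a graded ring and
of its quotient by a regular linear form. -/
def partialSum : (ℕ → ℕ) →+ (ℕ → ℕ) where
  toFun f k := ∑ j ∈ Finset.range (k + 1), f j
  map_zero' := by ext; simp
  map_add' f g := by ext; simp [Finset.sum_add_distrib]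

/-- The sequence `0, f 0, f 1, …`: the Hilbert function of `M(-1)` when `f` is that of `M`. -/
def shiftSeq (f : ℕ → ℕ) : ℕ → ℕ
  | 0 => 0
  | k + 1 => f k

lemma partialSum_apply_zero (f : ℕ → ℕ) : partialSum f 0 = f 0 := by simp [partialSum]

lemma partialSum_apply_succ (f : ℕ → ℕ) (k : ℕ) :
    partialSum f (k + 1) = f (k + 1) + partialSum f k :=
  (Finset.sum_range_succ f (k + 1)).trans (add_comm _ _)

lemma eq_partialSum_iff {f g : ℕ → ℕ} : f = partialSum g ↔ f = g + shiftSeq f := by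
  refine ⟨?_, fun h => funext fun k => ?_⟩
  · rintro rfl
    ext (_ | k)
    exacts [partialSum_apply_zero g, partialSum_apply_succ g k]
  · induction k with
    | zero => rw [h, partialSum_apply_zero]; rfl
    | succ k ih => rw [h, partialSum_apply_succ, ← ih]; rfl

lemma partialSum_mono : Monotone partialSum := fun _ _ h k =>
  Finset.sum_le_sum (s := Finset.range (k + 1)) fun j _ => h j

lemma partialSum_injective : Function.Injective partialSum := by
  intro f g h
  have hf := eq_partialSum_iff.1 (rfl : partialSum f = partialSum f)
  have hg := eq_partialSum_iff.1 (rfl : partialSum g = partialSum g)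
  rw [← h] at hg
  exact add_right_cancel (hf.symm.trans hg)

lemma commute_partialSum_shiftSeq : Function.Commute partialSum shiftSeq := by
  intro f
  ext k
  induction k with
  | zero => exact partialSum_apply_zero _
  | succ k ih =>
    rw [partialSum_apply_succ, ih]
    cases k with
    | zero => exact (partialSum_apply_zero f).symm
    | succ k => exact (partialSum_apply_succ f k).symm

lemma iterate_partialSum_add_shiftSeq (d : ℕ) (f g : ℕ → ℕ) :
    partialSum^[d] (f + shiftSeq g) = partialSum^[d] f + shiftSeq (partialSum^[d] g) := by
  rw [iterate_map_add, commute_partialSum_shiftSeq.iterate_left d g]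

end Sequences

section HilbertRegular

open MvPolynomial Filter

lemma sup_span_range_cons {R : Type*} [CommRing R] (I : Ideal R) (a : R) {d : ℕ} (θ : Fin d → R) :
    I ⊔ Ideal.span (Set.range (Fin.cons a θ : Fin (d + 1) → R)) =
      I ⊔ Ideal.span {a} ⊔ Ideal.span (Set.range θ) := by
  rw [Fin.range_cons, Ideal.span_insert, sup_assoc]

lemma mem_of_pow_mul_mem {R : Type*} [CommRing R] {I : Ideal R} {a : R} (h : I.colon {a} ≤ I)
    {m : ℕ} {f : R} (hf : a ^ m * f ∈ I) : f ∈ I := by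
  induction m with
  | zero => simpa using hf
  | succ m ih =>
    refine ih (h (Submodule.mem_colon_singleton.2 ?_))
    rwa [smul_eq_mul, mul_right_comm, ← pow_succ]

variable {σ K : Type*} [Field K]

lemma isHomogeneous_span_range {ι : Type*} {θ : ι → MvPolynomial σ K}
    (hθ : ∀ a, (θ a).IsHomogeneous 1) :
    (Ideal.span (Set.range θ)).IsHomogeneous (homogeneousSubmodule σ K) :=
  Ideal.homogeneous_span _ _ (by rintro _ ⟨a, rfl⟩; exact ⟨1, hθ a⟩)

lemma isHomogeneous_sup_span_range {I : Ideal (MvPolynomial σ K)}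
    (hI : I.IsHomogeneous (homogeneousSubmodule σ K)) {ι : Type*} {θ : ι → MvPolynomial σ K}
    (hθ : ∀ a, (θ a).IsHomogeneous 1) :
    (I ⊔ Ideal.span (Set.range θ)).IsHomogeneous (homogeneousSubmodule σ K) :=
  hI.sup (isHomogeneous_span_range hθ)

lemma isHomogeneous_cons {a : MvPolynomial σ K} (ha : a.IsHomogeneous 1) {d : ℕ}
    {θ : Fin d → MvPolynomial σ K} (hθ : ∀ b, (θ b).IsHomogeneous 1) (b : Fin (d + 1)) :
    ((Fin.cons a θ : Fin (d + 1) → MvPolynomial σ K) b).IsHomogeneous 1 := by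
  cases b using Fin.cases with
  | zero => exact ha
  | succ b => exact hθ b

lemma span_add_C_mul {a b : MvPolynomial σ K} {t : K} (ht : t ≠ 0) :
    Ideal.span {a + C t * b} = Ideal.span {b + C t⁻¹ * a} := by
  have hC : (C t : MvPolynomial σ K) * C t⁻¹ = 1 := by
    rw [← C_mul, mul_inv_cancel₀ ht, C_1]
  apply le_antisymm <;> rw [Ideal.span_singleton_le_span_singleton]
  · exact ⟨C t, by linear_combination (-a) * hC⟩
  · exact ⟨C t⁻¹, by linear_combination (-b) * hC⟩

variable [Finite σ]

lemma hilb_eq_add_shiftSeq {I : Ideal (MvPolynomial σ K)}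
    (hI : I.IsHomogeneous (homogeneousSubmodule σ K)) {x : MvPolynomial σ K}
    (hx : x.IsHomogeneous 1) :
    hilb I = hilb (I ⊔ Ideal.span {x}) + shiftSeq (hilb (I.colon {x})) := by
  ext (_ | k)
  exacts [(hilb_sup_span_singleton_of_lt hI hx one_pos).symm, hilb_add_eq hI hx k]

lemma hilb_le_partialSum {I : Ideal (MvPolynomial σ K)}
    (hI : I.IsHomogeneous (homogeneousSubmodule σ K)) {x : MvPolynomial σ K}
    (hx : x.IsHomogeneous 1) :
    hilb I ≤ partialSum (hilb (I ⊔ Ideal.span {x})) := by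
  intro k
  rw [congrFun (hilb_eq_add_shiftSeq hI hx) k]
  induction k with
  | zero => exact (partialSum_apply_zero _).ge
  | succ k ih =>
    rw [partialSum_apply_succ]
    refine Nat.add_le_add_left ((hilb_anti Ideal.le_colon k).trans ?_) _
    rwa [congrFun (hilb_eq_add_shiftSeq hI hx) k]

lemma le_of_hilb_le {I J : Ideal (MvPolynomial σ K)}
    (hJ : J.IsHomogeneous (homogeneousSubmodule σ K)) (hIJ : I ≤ J) (h : hilb I ≤ hilb J) :
    J ≤ I := by
  intro f hf
  refine mem_of_homogeneousComponent_mem fun k => ?_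
  have hfk : homogeneousComponent k f ∈ degPart J k :=
    ⟨homogeneousComponent_mem_of_mem hJ hf k, homogeneousComponent_isHomogeneous k f⟩
  exact (degPart_eq_of_hilb_le hIJ (h k) ▸ hfk).1

lemma hilb_eq_partialSum_iff {I : Ideal (MvPolynomial σ K)}
    (hI : I.IsHomogeneous (homogeneousSubmodule σ K)) {x : MvPolynomial σ K}
    (hx : x.IsHomogeneous 1) :
    hilb I = partialSum (hilb (I ⊔ Ideal.span {x})) ↔ I.colon {x} ≤ I := by
  have hexact := hilb_eq_add_shiftSeq hI hx
  rw [eq_partialSum_iff]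
  constructor
  · intro h
    refine le_of_hilb_le (isHomogeneous_colon_singleton hI hx) Ideal.le_colon fun k => ?_
    exact (congrFun (add_left_cancel (h.symm.trans hexact)) (k + 1)).le
  · intro h
    rwa [le_antisymm h Ideal.le_colon] at hexact

-- Multiplication by `c` on `S/I` can only have a kernel in small degrees, and powers of the
-- nonzerodivisor `a` move it to large degrees.
lemma hilb_eq_partialSum_of_exchange {I : Ideal (MvPolynomial σ K)}
    (hI : I.IsHomogeneous (homogeneousSubmodule σ K)) {a c : MvPolynomial σ K}
    (ha : a.IsHomogeneous 1) (hc : c.IsHomogeneous 1)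
    (h : hilb I = partialSum (hilb (I ⊔ Ideal.span {a}))) {N M : ℕ}
    (hN : hilb (I ⊔ Ideal.span {a}) N = 0) (hM : hilb (I ⊔ Ideal.span {c}) M = 0) :
    hilb I = partialSum (hilb (I ⊔ Ideal.span {c})) := by
  have hcolon := isHomogeneous_colon_singleton hI hc
  have hlarge (k : ℕ) (hk : N + M ≤ k) : hilb I k ≤ hilb (I.colon {c}) k := by
    have h₁ := congrFun (eq_partialSum_iff.1 h) (k + 1)
    have h₂ := congrFun (hilb_eq_add_shiftSeq hI hc) (k + 1)
    rw [Pi.add_apply, hilb_eq_zero_of_le hN (by omega)] at h₁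
    rw [Pi.add_apply, hilb_eq_zero_of_le hM (by omega)] at h₂
    exact (add_left_cancel (h₁.symm.trans h₂)).le
  refine (hilb_eq_partialSum_iff hI hc).2 fun f hf => mem_of_homogeneousComponent_mem fun k => ?_
  have hmem : a ^ (N + M) * homogeneousComponent k f ∈ degPart (I.colon {c}) (N + M + k) := by
    refine ⟨Ideal.mul_mem_left _ _ (homogeneousComponent_mem_of_mem hcolon hf k), ?_⟩
    simpa using (ha.pow (N + M)).mul (homogeneousComponent_isHomogeneous k f)
  rw [← degPart_eq_of_hilb_le Ideal.le_colon (hlarge _ (by omega))] at hmem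
  exact mem_of_pow_mul_mem ((hilb_eq_partialSum_iff hI ha).1 h) hmem.1

/-- Numerical form of the condition that the linear forms `θ` are a regular sequence on `S/I`:
each of them contributes one summation to the Hilbert function. -/
def IsHilbertRegular {d : ℕ} (I : Ideal (MvPolynomial σ K)) (θ : Fin d → MvPolynomial σ K) : Prop :=
  hilb I = partialSum^[d] (hilb (I ⊔ Ideal.span (Set.range θ)))

lemma hilb_le_iterate_partialSum {I : Ideal (MvPolynomial σ K)}
    (hI : I.IsHomogeneous (homogeneousSubmodule σ K)) {d : ℕ} {θ : Fin d → MvPolynomial σ K}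
    (hθ : ∀ a, (θ a).IsHomogeneous 1) :
    hilb I ≤ partialSum^[d] (hilb (I ⊔ Ideal.span (Set.range θ))) := by
  induction d generalizing I with
  | zero => simp
  | succ d ih =>
    rw [← Fin.cons_self_tail θ, sup_span_range_cons, Function.iterate_succ_apply']
    exact (hilb_le_partialSum hI (hθ 0)).trans (partialSum_mono
      (ih (hI.sup (isHomogeneous_span_singleton (hθ 0))) fun a => hθ a.succ))

lemma isHilbertRegular_cons {I : Ideal (MvPolynomial σ K)}
    (hI : I.IsHomogeneous (homogeneousSubmodule σ K)) {a : MvPolynomial σ K}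
    (ha : a.IsHomogeneous 1) {d : ℕ} {θ : Fin d → MvPolynomial σ K}
    (hθ : ∀ b, (θ b).IsHomogeneous 1) :
    IsHilbertRegular I (Fin.cons a θ : Fin (d + 1) → MvPolynomial σ K) ↔
      hilb I = partialSum (hilb (I ⊔ Ideal.span {a})) ∧
        IsHilbertRegular (I ⊔ Ideal.span {a}) θ := by
  have h₁ := hilb_le_partialSum hI ha
  have h₂ := hilb_le_iterate_partialSum (hI.sup (isHomogeneous_span_singleton ha)) hθ
  rw [IsHilbertRegular, IsHilbertRegular, Function.iterate_succ_apply', sup_span_range_cons]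
  refine ⟨fun h => ?_, fun ⟨h₃, h₄⟩ => by rw [← h₄, h₃]⟩
  have h₃ := h₁.antisymm ((partialSum_mono h₂).trans h.ge)
  exact ⟨h₃, partialSum_injective (h₃.symm.trans h)⟩

lemma isHilbertRegular_cons_right {I : Ideal (MvPolynomial σ K)}
    (hI : I.IsHomogeneous (homogeneousSubmodule σ K)) {a : MvPolynomial σ K}
    (ha : a.IsHomogeneous 1) {d : ℕ} {θ : Fin d → MvPolynomial σ K}
    (hθ : ∀ b, (θ b).IsHomogeneous 1) :
    IsHilbertRegular I (Fin.cons a θ : Fin (d + 1) → MvPolynomial σ K) ↔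
      IsHilbertRegular I θ ∧ hilb (I ⊔ Ideal.span (Set.range θ)) =
        partialSum (hilb (I ⊔ Ideal.span (Set.range θ) ⊔ Ideal.span {a})) := by
  have h₁ := hilb_le_iterate_partialSum hI hθ
  have h₂ := hilb_le_partialSum (isHomogeneous_sup_span_range hI hθ) ha
  rw [IsHilbertRegular, IsHilbertRegular, Function.iterate_succ_apply, sup_span_range_cons,
    sup_right_comm]
  refine ⟨fun h => ?_, fun ⟨h₃, h₄⟩ => by rw [← h₄, h₃]⟩
  have h₃ := h₁.antisymm ((partialSum_mono.iterate d h₂).trans h.ge)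
  exact ⟨h₃, partialSum_injective.iterate d (h₃.symm.trans h)⟩

lemma IsHilbertRegular.exchange {I : Ideal (MvPolynomial σ K)}
    (hI : I.IsHomogeneous (homogeneousSubmodule σ K)) {a c : MvPolynomial σ K}
    (ha : a.IsHomogeneous 1) (hc : c.IsHomogeneous 1) {d : ℕ} {θ : Fin d → MvPolynomial σ K}
    (hθ : ∀ b, (θ b).IsHomogeneous 1)
    (h : IsHilbertRegular I (Fin.cons a θ : Fin (d + 1) → MvPolynomial σ K)) {N M : ℕ}
    (hN : hilb (I ⊔ Ideal.span (Set.range θ) ⊔ Ideal.span {a}) N = 0)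
    (hM : hilb (I ⊔ Ideal.span (Set.range θ) ⊔ Ideal.span {c}) M = 0) :
    IsHilbertRegular I (Fin.cons c θ : Fin (d + 1) → MvPolynomial σ K) := by
  rw [isHilbertRegular_cons_right hI ha hθ] at h
  rw [isHilbertRegular_cons_right hI hc hθ]
  exact ⟨h.1, hilb_eq_partialSum_of_exchange (isHomogeneous_sup_span_range hI hθ) ha hc h.2 hN hM⟩

lemma eventually_hilb_sup_span_add_C_mul_eq_zero {I : Ideal (MvPolynomial σ K)}
    (hI : I.IsHomogeneous (homogeneousSubmodule σ K)) {a b : MvPolynomial σ K}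
    (ha : a.IsHomogeneous 1) (hb : b.IsHomogeneous 1) {k : ℕ}
    (h : hilb (I ⊔ Ideal.span {a}) k = 0) :
    ∀ᶠ t in cofinite, hilb (I ⊔ Ideal.span {a + C t * b}) k = 0 := by
  have hQ := (IsHomFamily.const ha).add (IsHomFamily.const hb).X_mul
  filter_upwards [eventually_hilb_sup_span_eval_le hI hQ k] with t ht
  simpa only [Polynomial.eval_add, Polynomial.eval_C, Polynomial.eval_mul, Polynomial.eval_X,
    zero_mul, add_zero, h, Nat.le_zero] using ht

lemma exists_common_hilb_sup_span_eq_zero [Infinite K] {I J : Ideal (MvPolynomial σ K)}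
    (hI : I.IsHomogeneous (homogeneousSubmodule σ K))
    (hJ : J.IsHomogeneous (homogeneousSubmodule σ K)) {a b : MvPolynomial σ K}
    (ha : a.IsHomogeneous 1) (hb : b.IsHomogeneous 1) {N M : ℕ}
    (hN : hilb (I ⊔ Ideal.span {a}) N = 0) (hM : hilb (J ⊔ Ideal.span {b}) M = 0) :
    ∃ c : MvPolynomial σ K, c.IsHomogeneous 1 ∧
      hilb (I ⊔ Ideal.span {c}) N = 0 ∧ hilb (J ⊔ Ideal.span {c}) M = 0 := by
  obtain ⟨t, hIt, hJt, ht⟩ := ((eventually_hilb_sup_span_add_C_mul_eq_zero hI ha hb hN).and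
    (((inv_injective (G := K)).tendsto_cofinite.eventually
      (eventually_hilb_sup_span_add_C_mul_eq_zero hJ hb ha hM)).and
        (eventually_cofinite_ne 0))).exists
  exact ⟨a + C t * b, ha.add (hb.C_mul t), hIt, by rwa [span_add_C_mul ht]⟩

-- The entries of `θ₀` are replaced by those of `θ` one at a time, through a generic linear form.
theorem IsHilbertRegular.of_hilb_eq_zero [Infinite K] {I : Ideal (MvPolynomial σ K)}
    (hI : I.IsHomogeneous (homogeneousSubmodule σ K)) {d : ℕ} {θ₀ θ : Fin d → MvPolynomial σ K}
    (hθ₀ : ∀ a, (θ₀ a).IsHomogeneous 1) (hθ : ∀ a, (θ a).IsHomogeneous 1)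
    (h : IsHilbertRegular I θ₀) {N M : ℕ} (hN : hilb (I ⊔ Ideal.span (Set.range θ₀)) N = 0)
    (hM : hilb (I ⊔ Ideal.span (Set.range θ)) M = 0) : IsHilbertRegular I θ := by
  induction d generalizing I with
  | zero => exact Subsingleton.elim θ₀ θ ▸ h
  | succ d ih =>
    obtain ⟨a, θ₀, rfl⟩ : ∃ a η, θ₀ = Fin.cons a η := ⟨_, _, (Fin.cons_self_tail θ₀).symm⟩
    obtain ⟨b, θ, rfl⟩ : ∃ b η, θ = Fin.cons b η := ⟨_, _, (Fin.cons_self_tail θ).symm⟩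
    have ha : a.IsHomogeneous 1 := hθ₀ 0
    have hb : b.IsHomogeneous 1 := hθ 0
    replace hθ₀ (c) : (θ₀ c).IsHomogeneous 1 := hθ₀ (Fin.succ c)
    replace hθ (c) : (θ c).IsHomogeneous 1 := hθ (Fin.succ c)
    rw [sup_span_range_cons, sup_right_comm] at hN hM
    obtain ⟨c, hc, hcN, hcM⟩ := exists_common_hilb_sup_span_eq_zero
      (isHomogeneous_sup_span_range hI hθ₀) (isHomogeneous_sup_span_range hI hθ) ha hb hN hM
    have hcθ₀ := (isHilbertRegular_cons hI hc hθ₀).1 (h.exchange hI ha hc hθ₀ hN hcN)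
    have hcθ : IsHilbertRegular (I ⊔ Ideal.span {c}) θ :=
      ih (hI.sup (isHomogeneous_span_singleton hc)) hθ₀ hθ hcθ₀.2
        (by rwa [sup_right_comm]) (by rwa [sup_right_comm])
    exact ((isHilbertRegular_cons hI hc hθ).2 ⟨hcθ₀.1, hcθ⟩).exchange hI hc hb hθ hcM hM

end HilbertRegular

section RegularSequences

open RingTheory.Sequence MvPolynomial

open scoped Pointwise

lemma isWeaklyRegular_quotient_cons_iff {R : Type*} [CommRing R] (I : Ideal R) (a : R)
    (l : List R) :
    IsWeaklyRegular (R ⧸ I) (a :: l) ↔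
      I.colon {a} ≤ I ∧ IsWeaklyRegular (R ⧸ (I ⊔ Ideal.span {a})) l := by
  have htop : a • (⊤ : Submodule R (R ⧸ I)) = Submodule.map I.mkQ (Ideal.span {a}) := by
    rw [← Submodule.range_mkQ I, ← Submodule.map_top, ← Submodule.map_pointwise_smul,
      ← Submodule.ideal_span_singleton_smul, smul_eq_mul, Ideal.mul_top]
  rw [isWeaklyRegular_cons_iff, isSMulRegular_quotient_iff_mem_of_smul_mem]
  refine and_congr ?_ (LinearEquiv.isWeaklyRegular_congr ?_ l)
  · simp [SetLike.le_def, Submodule.mem_colon_singleton, mul_comm]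
  · exact (Submodule.quotEquivOfEq _ _ htop).trans
      (Submodule.quotientQuotientEquivQuotientSup I (Ideal.span {a}))

variable {σ K : Type*} [Field K] [Finite σ]

lemma isWeaklyRegular_ofFn_iff {I : Ideal (MvPolynomial σ K)}
    (hI : I.IsHomogeneous (homogeneousSubmodule σ K)) {d : ℕ} {θ : Fin d → MvPolynomial σ K}
    (hθ : ∀ a, (θ a).IsHomogeneous 1) :
    IsWeaklyRegular (MvPolynomial σ K ⧸ I) (List.ofFn θ) ↔ IsHilbertRegular I θ := by
  induction d generalizing I with
  | zero => simp [IsHilbertRegular]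
  | succ d ih =>
    rw [List.ofFn_succ, isWeaklyRegular_quotient_cons_iff, ← hilb_eq_partialSum_iff hI (hθ 0),
      ih (hI.sup (isHomogeneous_span_singleton (hθ 0))) fun a => hθ a.succ,
      ← isHilbertRegular_cons hI (hθ 0) fun a => hθ a.succ]
    exact iff_of_eq (congrArg _ (Fin.cons_self_tail θ))

lemma isWeaklyRegular_map_mk_iff {I : Ideal (MvPolynomial σ K)}
    (hI : I.IsHomogeneous (homogeneousSubmodule σ K)) {d : ℕ} {θ : Fin d → MvPolynomial σ K}
    (hθ : ∀ a, (θ a).IsHomogeneous 1) :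
    IsWeaklyRegular (MvPolynomial σ K ⧸ I) ((List.ofFn θ).map (Ideal.Quotient.mk I)) ↔
      IsHilbertRegular I θ := by
  rw [← isWeaklyRegular_ofFn_iff hI hθ, ← Ideal.Quotient.algebraMap_eq,
    isWeaklyRegular_map_algebraMap_iff]

lemma IsHilbertRegular.isRegular {I : Ideal (MvPolynomial σ K)}
    (hI : I.IsHomogeneous (homogeneousSubmodule σ K)) {d : ℕ} {θ : Fin d → MvPolynomial σ K}
    (hθ : ∀ a, (θ a).IsHomogeneous 1) (h : IsHilbertRegular I θ)
    (hne : I ⊔ Ideal.span (Set.range θ) ≠ ⊤) :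
    IsRegular (MvPolynomial σ K ⧸ I) ((List.ofFn θ).map (Ideal.Quotient.mk I)) := by
  refine ⟨(isWeaklyRegular_map_mk_iff hI hθ).2 h, fun htop => hne ?_⟩
  have hofList : Ideal.ofList (List.ofFn θ) = Ideal.span (Set.range θ) := by
    simp [Ideal.ofList, Set.range, List.mem_ofFn]
  rw [smul_eq_mul, Ideal.mul_top, ← Ideal.map_ofList, hofList] at htop
  have hcomap := Ideal.comap_map_of_surjective' _ (Ideal.Quotient.mk_surjective (I := I))
    (Ideal.span (Set.range θ))
  rw [← htop, Ideal.comap_top, Ideal.mk_ker, sup_comm] at hcomap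
  exact hcomap.symm

end RegularSequences

section StanleyReisner

open MvPolynomial

/-- The vertex `a + 1 ∈ [n]` of a complex that corresponds to the variable `X a`. -/
def vertexEmb (n : ℕ) : Fin n ↪ ℕ :=
  Fin.valEmbedding.trans (addRightEmbedding 1)

lemma exists_map_vertexEmb_eq {n : ℕ} {F : Finset ℕ} (hF : F ⊆ Finset.Icc 1 n) :
    ∃ s : Finset (Fin n), s.map (vertexEmb n) = F := by
  have huniv : (Finset.univ.map (vertexEmb n) : Finset ℕ) = Finset.Icc 1 n := by
    ext v
    simp only [vertexEmb, Finset.mem_map, Finset.mem_univ, true_and, Finset.mem_Icc]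
    exact ⟨by rintro ⟨a, rfl⟩; simp, fun h => ⟨⟨v - 1, by omega⟩, by simp; omega⟩⟩
  obtain ⟨s, -, hs⟩ := Finset.subset_map_iff.1 (huniv ▸ hF)
  exact ⟨s, hs.symm⟩

lemma map_vertexEmb_subset_Icc {n : ℕ} (s : Finset (Fin n)) :
    s.map (vertexEmb n) ⊆ Finset.Icc 1 n := by
  intro v hv
  obtain ⟨a, -, rfl⟩ := Finset.mem_map.1 hv
  simp [vertexEmb]

lemma sum_single_one_le_iff {σ : Type*} {s : Finset σ} {u : σ →₀ ℕ} :
    ∑ a ∈ s, Finsupp.single a 1 ≤ u ↔ s ⊆ u.support := by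
  classical
  rw [Finsupp.le_def, Finset.subset_iff]
  refine forall_congr' fun a => ?_
  simp only [Finsupp.coe_finsetSum, Finset.sum_apply, Finsupp.single_apply, Finset.sum_ite_eq',
    Finsupp.mem_support_iff]
  split_ifs with h <;> simp [h, Nat.one_le_iff_ne_zero]

variable {K : Type*} {n : ℕ}

lemma faceMonomial_map_vertexEmb [CommRing K] (s : Finset (Fin n)) :
    faceMonomial K n (s.map (vertexEmb n)) = ∏ a ∈ s, X a := by
  rw [faceMonomial]
  congr 1
  ext a
  simp [vertexEmb, Fin.val_inj]

lemma srIdeal_eq_span_monomial [CommRing K] (Γ : Set (Finset ℕ)) :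
    srIdeal K n Γ = Ideal.span ((fun u => monomial u (1 : K)) ''
      ((fun s : Finset (Fin n) => ∑ a ∈ s, Finsupp.single a 1) ''
        {s | s.map (vertexEmb n) ∉ Γ})) := by
  have hmonomial (s : Finset (Fin n)) :
      faceMonomial K n (s.map (vertexEmb n)) = monomial (∑ a ∈ s, Finsupp.single a 1) 1 := by
    rw [faceMonomial_map_vertexEmb, monomial_sum_one]
    rfl
  rw [srIdeal, Set.image_image]
  congr 1
  ext f
  constructor
  · rintro ⟨F, hF, hFΓ, rfl⟩
    obtain ⟨s, rfl⟩ := exists_map_vertexEmb_eq hF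
    exact ⟨s, hFΓ, (hmonomial s).symm⟩
  · rintro ⟨s, hs, rfl⟩
    exact ⟨_, map_vertexEmb_subset_Icc s, hs, (hmonomial s).symm⟩

lemma mem_srIdeal [CommRing K] {Γ : Set (Finset ℕ)} (hΓ : IsLowerSet Γ)
    {f : MvPolynomial (Fin n) K} :
    f ∈ srIdeal K n Γ ↔ ∀ u ∈ f.support, u.support.map (vertexEmb n) ∉ Γ := by
  rw [srIdeal_eq_span_monomial, mem_ideal_span_monomial_image]
  refine forall₂_congr fun u _ => ?_
  simp only [Set.exists_mem_image, Set.mem_ofPred_eq, sum_single_one_le_iff]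
  exact ⟨fun ⟨s, hs, hsu⟩ h => hs (hΓ (Finset.map_subset_map.2 hsu) h),
    fun h => ⟨_, h, subset_rfl⟩⟩

variable [Field K]

lemma isHomogeneous_srIdeal (Γ : Set (Finset ℕ)) :
    (srIdeal K n Γ).IsHomogeneous (homogeneousSubmodule (Fin n) K) := by
  rw [srIdeal_eq_span_monomial]
  refine Ideal.homogeneous_span _ _ ?_
  rintro _ ⟨u, -, rfl⟩
  exact ⟨_, isHomogeneous_monomial _ rfl⟩

lemma finrank_supported {ι : Type*} (s : Finset ι) :
    Module.finrank K (AddMonoidAlgebra.supported K K (s : Set ι)) = s.card := by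
  rw [(AddMonoidAlgebra.supportedEquivFinsupp (S := K) (s : Set ι)).finrank_eq,
    Module.finrank_finsupp_self]
  simp

lemma hilb_eq_card_of_mem_iff {σ : Type*} [Fintype σ] [DecidableEq σ]
    {I : Ideal (MvPolynomial σ K)} {M : Set (σ →₀ ℕ)} [DecidablePred (· ∈ M)]
    (hI : ∀ f, f ∈ I ↔ ∀ u ∈ f.support, u ∉ M) (k : ℕ) :
    hilb I k = ((Finset.finsuppAntidiag Finset.univ k).filter (· ∈ M)).card := by
  have hall : homogeneousSubmodule σ K k =
      AddMonoidAlgebra.supported K K (Finset.finsuppAntidiag Finset.univ k : Finset (σ →₀ ℕ)) := by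
    rw [homogeneousSubmodule_eq_finsupp_supported]
    congr 1
    ext u
    simp [Finsupp.degree_eq_sum]
  have hpart : degPart I k = AddMonoidAlgebra.supported K K
      ((Finset.finsuppAntidiag Finset.univ k).filter (· ∉ M) : Finset (σ →₀ ℕ)) := by
    ext f
    rw [degPart, Submodule.mem_inf, hall, Submodule.restrictScalars_mem, hI,
      AddMonoidAlgebra.mem_supported, AddMonoidAlgebra.mem_supported, Finset.coe_subset,
      Finset.coe_subset, and_comm]
    simp only [Finset.subset_iff, Finset.mem_filter, imp_and, forall_and]
    rfl
  have hrank := hilb_add_finrank_degPart I k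
  rw [hall, hpart, finrank_supported, finrank_supported] at hrank
  have hcard := Finset.card_filter_add_card_filter_not (s := Finset.finsuppAntidiag Finset.univ k)
    (· ∈ M)
  omega

end StanleyReisner

section GeneratingFunctions

open PowerSeries

/-- The generating function `∑ f k X^k` of a sequence. -/
noncomputable def genFun (f : ℕ → ℕ) : ℤ⟦X⟧ := mk fun k => (f k : ℤ)

lemma one_sub_X_pow_mul_genFun_iterate (d : ℕ) (f : ℕ → ℕ) :
    (1 - X) ^ d * genFun (partialSum^[d] f) = genFun f := by
  have hone (f : ℕ → ℕ) : (1 - X) * genFun (partialSum f) = genFun f := by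
    ext (_ | k)
    · simp [genFun, partialSum_apply_zero]
    · simp [genFun, sub_mul, coeff_succ_X_mul, partialSum_apply_succ]
  induction d generalizing f with
  | zero => simp
  | succ d ih => rw [Function.iterate_succ_apply, pow_succ', mul_assoc, ih, hone]

lemma coeff_one_sub_X_pow (m k : ℕ) : coeff k ((1 - X : ℤ⟦X⟧) ^ m) = (-1) ^ k * m.choose k := by
  have hX : (1 - X : ℤ⟦X⟧) ^ m =
      ((((1 : Polynomial ℤ) + Polynomial.X) ^ m).comp (Polynomial.C (-1) * Polynomial.X) :
        Polynomial ℤ) := by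
    simp [sub_eq_add_neg]
  rw [hX, Polynomial.coeff_coe, Polynomial.comp_C_mul_X_coeff, Polynomial.coeff_one_add_X_pow,
    mul_comm]

lemma card_filter_support_eq {σ : Type*} [Fintype σ] [DecidableEq σ] (s : Finset σ) (k : ℕ) :
    (((Finset.finsuppAntidiag Finset.univ k).filter fun u : σ →₀ ℕ => u.support = s).card : ℤ) =
      coeff k ((X * mk 1 : ℤ⟦X⟧) ^ s.card) := by
  have hcoeff (m : ℕ) : coeff m (X * mk 1 : ℤ⟦X⟧) = if m ≠ 0 then 1 else 0 := by
    cases m <;> simp [coeff_succ_X_mul]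
  have hfilter : (Finset.finsuppAntidiag Finset.univ k).filter (fun u : σ →₀ ℕ => u.support = s) =
      (Finset.finsuppAntidiag s k).filter fun u => ∀ a ∈ s, u a ≠ 0 := by
    ext u
    simp only [Finset.mem_filter, Finset.mem_finsuppAntidiag', Finset.subset_univ, and_true,
      Finset.Subset.antisymm_iff, and_assoc, Finset.subset_iff (s₁ := s), Finsupp.mem_support_iff]
  rw [hfilter, ← Finset.prod_const, coeff_prod, Finset.natCast_card_filter]
  simp only [hcoeff, Finset.prod_boole]
  congr!

variable {K : Type*} [Field K] {n d : ℕ} {Γ Δ : Set (Finset ℕ)}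

open Classical in
lemma fvec_eq_card (hsub : ∀ F ∈ Γ, F ⊆ Finset.Icc 1 n) (j : ℕ) :
    fvec Γ j = {s : Finset (Fin n) | s.map (vertexEmb n) ∈ Γ ∧ s.card = j}.toFinset.card := by
  have himage : {F ∈ Γ | F.card = j} =
      Finset.map (vertexEmb n) '' {s | s.map (vertexEmb n) ∈ Γ ∧ s.card = j} := by
    ext F
    constructor
    · rintro ⟨hF, hj⟩
      obtain ⟨s, rfl⟩ := exists_map_vertexEmb_eq (hsub F hF)
      exact ⟨s, ⟨hF, by simpa using hj⟩, rfl⟩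
    · rintro ⟨s, ⟨hs, hj⟩, rfl⟩
      exact ⟨hs, by simpa using hj⟩
  rw [fvec, himage, Set.ncard_image_of_injective _ (Finset.map_injective _),
    Set.ncard_eq_toFinset_card']

lemma genFun_hilb_srIdeal (hΓ : IsLowerSet Γ) (hsub : ∀ F ∈ Γ, F ⊆ Finset.Icc 1 n)
    (hd : ∀ F ∈ Γ, F.card ≤ d) :
    genFun (hilb (srIdeal K n Γ)) =
      ∑ j ∈ Finset.range (d + 1), (fvec Γ j : ℤ⟦X⟧) * (X * mk 1) ^ j := by
  classical
  set A : Finset (Finset (Fin n)) := {s | s.map (vertexEmb n) ∈ Γ}.toFinset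
  have hA (s : Finset (Fin n)) : s ∈ A ↔ s.map (vertexEmb n) ∈ Γ := by simp [A]
  have hface : genFun (hilb (srIdeal K n Γ)) = ∑ s ∈ A, (X * mk 1 : ℤ⟦X⟧) ^ s.card := by
    ext k
    have hmem (f : MvPolynomial (Fin n) K) := mem_srIdeal (n := n) hΓ (f := f)
    rw [genFun, coeff_mk, hilb_eq_card_of_mem_iff
      (M := {u | u.support.map (vertexEmb n) ∈ Γ}) hmem, map_sum,
      Finset.card_eq_sum_card_fiberwise (t := A) (f := Finsupp.support), Nat.cast_sum]
    · refine Finset.sum_congr rfl fun s hs => ?_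
      rw [← card_filter_support_eq, Finset.filter_filter]
      congr 2
      ext u
      simp only [Finset.mem_filter, Set.mem_ofPred_eq]
      refine and_congr_right fun _ => and_iff_right_of_imp ?_
      rintro rfl
      exact (hA _).1 hs
    · intro u hu
      exact (hA _).2 (Finset.mem_filter.1 hu).2
  rw [hface, ← Finset.sum_fiberwise_of_maps_to (s := A) (t := Finset.range (d + 1))
    (g := Finset.card)]
  · refine Finset.sum_congr rfl fun j _ => ?_
    have hcard : (A.filter fun s => s.card = j).card = fvec Γ j := by
      rw [fvec_eq_card hsub]
      congr 1
      ext s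
      simp [hA]
    rw [← hcard, ← nsmul_eq_mul, ← Finset.sum_const]
    exact Finset.sum_congr rfl fun s hs => by rw [(Finset.mem_filter.1 hs).2]
  · intro s hs
    have := hd _ ((hA s).1 hs)
    rw [Finset.card_map] at this
    exact Finset.mem_range_succ_iff.2 this

lemma genFun_injective : Function.Injective genFun := fun f g h =>
  funext fun k => by simpa [genFun] using congrArg (coeff k) h

lemma hilb_srIdeal_eq_of_fvec_eq (hΓ : IsLowerSet Γ) (hΔ : IsLowerSet Δ)
    (hΓsub : ∀ F ∈ Γ, F ⊆ Finset.Icc 1 n) (hΔsub : ∀ F ∈ Δ, F ⊆ Finset.Icc 1 n)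
    (h : fvec Γ = fvec Δ) : hilb (srIdeal K n Γ) = hilb (srIdeal K n Δ) := by
  have hcard {F : Finset ℕ} (hF : F ⊆ Finset.Icc 1 n) : F.card ≤ n := by
    simpa using Finset.card_le_card hF
  apply genFun_injective
  rw [genFun_hilb_srIdeal hΓ hΓsub fun F hF => hcard (hΓsub F hF),
    genFun_hilb_srIdeal hΔ hΔsub fun F hF => hcard (hΔsub F hF), h]

end GeneratingFunctions

section HVector

open PowerSeries

/-- `Γ` is a simplicial complex of dimension `d - 1` on subsets of `[n]`; not every element of `[n]`
needs to be a vertex. -/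
structure IsComplexOfRank (n d : ℕ) (Γ : Set (Finset ℕ)) : Prop where
  isLowerSet : IsLowerSet Γ
  subset_Icc : ∀ F ∈ Γ, F ⊆ Finset.Icc 1 n
  card_le : ∀ F ∈ Γ, F.card ≤ d
  exists_card_eq : ∃ F ∈ Γ, F.card = d

variable {K : Type*} [Field K] {n d : ℕ} {Γ : Set (Finset ℕ)}

lemma IsComplexOfRank.of_sdim_eq (hΓ : IsLowerSet Γ) (hsub : ∀ F ∈ Γ, F ⊆ Finset.Icc 1 n)
    (hne : Γ.Nonempty) (h : sdim Γ = (d : ℤ) - 1) : IsComplexOfRank n d Γ := by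
  have hfin : Γ.Finite := (Finset.finite_toSet (Finset.Icc 1 n).powerset).subset fun F hF =>
    Finset.mem_coe.2 (Finset.mem_powerset.2 (hsub F hF))
  have himage := hfin.image fun F : Finset ℕ => (F.card : ℤ) - 1
  refine ⟨hΓ, hsub, fun F hF => ?_, ?_⟩
  · have hle := le_csSup himage.bddAbove (Set.mem_image_of_mem _ hF)
    rw [← sdim, h] at hle
    omega
  · obtain ⟨F, hF, hFd⟩ := (hne.image _).csSup_mem himage
    rw [← sdim, h] at hFd
    exact ⟨F, hF, by simpa using hFd⟩

lemma genFun_hilb_srIdeal_sup (hΓ : IsComplexOfRank n d Γ) {θ : Fin d → MvPolynomial (Fin n) K}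
    (hθ : IsHilbertRegular (srIdeal K n Γ) θ) :
    genFun (hilb (srIdeal K n Γ ⊔ Ideal.span (Set.range θ))) =
      ∑ j ∈ Finset.range (d + 1), (fvec Γ j : ℤ⟦X⟧) * (X ^ j * (1 - X) ^ (d - j)) := by
  rw [← one_sub_X_pow_mul_genFun_iterate d, ← hθ,
    genFun_hilb_srIdeal hΓ.isLowerSet hΓ.subset_Icc hΓ.card_le, Finset.mul_sum]
  refine Finset.sum_congr rfl fun j hj => ?_
  have hgeom : (1 - X) * (X * mk 1) = (X : ℤ⟦X⟧) := by
    linear_combination X * mk_one_mul_one_sub_eq_one ℤ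
  calc (1 - X) ^ d * ((fvec Γ j : ℤ⟦X⟧) * (X * mk 1) ^ j)
      = (1 - X) ^ (d - j) * (1 - X) ^ j * ((fvec Γ j : ℤ⟦X⟧) * (X * mk 1) ^ j) := by
        rw [← pow_add, Nat.sub_add_cancel (Finset.mem_range_succ_iff.1 hj)]
    _ = (fvec Γ j : ℤ⟦X⟧) * (((1 - X) * (X * mk 1)) ^ j * (1 - X) ^ (d - j)) := by
        rw [mul_pow (1 - X)]; ring
    _ = (fvec Γ j : ℤ⟦X⟧) * (X ^ j * (1 - X) ^ (d - j)) := by rw [hgeom]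

lemma hilb_srIdeal_sup_eq_zero (hΓ : IsComplexOfRank n d Γ) {θ : Fin d → MvPolynomial (Fin n) K}
    (hθ : IsHilbertRegular (srIdeal K n Γ) θ) {k : ℕ} (hk : d < k) :
    hilb (srIdeal K n Γ ⊔ Ideal.span (Set.range θ)) k = 0 := by
  have hcoeff := congrArg (coeff k) (genFun_hilb_srIdeal_sup hΓ hθ)
  rw [genFun, coeff_mk, map_sum] at hcoeff
  rw [← Nat.cast_eq_zero (R := ℤ), hcoeff]
  refine Finset.sum_eq_zero fun j hj => ?_
  rw [Finset.mem_range_succ_iff] at hj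
  rw [← nsmul_eq_mul, map_nsmul, coeff_X_pow_mul', if_pos (hj.trans hk.le), coeff_one_sub_X_pow,
    Nat.choose_eq_zero_of_lt (by omega), Nat.cast_zero, mul_zero, smul_zero]

lemma hilb_srIdeal_sup_eq_hvec (hΓ : IsComplexOfRank n d Γ) {θ : Fin d → MvPolynomial (Fin n) K}
    (hθ : IsHilbertRegular (srIdeal K n Γ) θ) {k : ℕ} (hk : k ≤ d) :
    (hilb (srIdeal K n Γ ⊔ Ideal.span (Set.range θ)) k : ℤ) = hvec d Γ k := by
  have hcoeff := congrArg (coeff k) (genFun_hilb_srIdeal_sup hΓ hθ)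
  rw [genFun, coeff_mk, map_sum] at hcoeff
  rw [hcoeff, hvec]
  symm
  refine Finset.sum_subset_zero_on_sdiff (Finset.range_subset_range.2 (by omega)) ?_ ?_
  · intro j hj
    rw [Finset.mem_sdiff, Finset.mem_range_succ_iff, Finset.mem_range_succ_iff] at hj
    rw [← nsmul_eq_mul, map_nsmul, coeff_X_pow_mul', if_neg hj.2, smul_zero]
  · intro j hj
    rw [Finset.mem_range_succ_iff] at hj
    rw [← nsmul_eq_mul, map_nsmul, coeff_X_pow_mul', if_pos hj, coeff_one_sub_X_pow,
      Nat.choose_symm_of_eq_add (show d - j = (d - k) + (k - j) by omega), nsmul_eq_mul]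
    ring

end HVector

section KrullDimension

open MvPolynomial

lemma ringKrullDim_quotient_le_of_forall {R : Type*} [CommRing R] (I : Ideal R) (d : WithBot ℕ∞)
    (h : ∀ p : PrimeSpectrum R, I ≤ p.asIdeal →
      ∃ P : Ideal R, P ≤ p.asIdeal ∧ ringKrullDim (R ⧸ P) ≤ d) :
    ringKrullDim (R ⧸ I) ≤ d := by
  rw [ringKrullDim_quotient, Order.krullDim_eq_iSup_coheight]
  refine iSup_le fun p => ?_
  obtain ⟨P, hP, hd⟩ := h p.1 p.2
  rw [Order.coheight_eq_krullDim_Ici]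
  refine le_trans ?_ hd
  rw [ringKrullDim_quotient]
  exact Order.krullDim_le_of_strictMono
    (fun q : Set.Ici p => (⟨q.1.1, fun x hx => q.2 (hP hx)⟩ : PrimeSpectrum.zeroLocus (P : Set R)))
    fun _ _ h => h

variable {K : Type*} [Field K]

lemma ringKrullDim_mvPolynomial_coe {σ : Type*} (s : Finset σ) :
    ringKrullDim (MvPolynomial s K) = s.card := by
  rw [MvPolynomial.ringKrullDim_of_isNoetherianRing, ringKrullDim_eq_zero_of_field, zero_add,
    Nat.card_eq_fintype_card, Fintype.card_coe]

lemma ringKrullDim_quotient_span_X_le {σ : Type*} (s : Finset σ) :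
    ringKrullDim (MvPolynomial σ K ⧸ Ideal.span (X '' {a | a ∉ s} : Set (MvPolynomial σ K))) ≤
      s.card := by
  classical
  rw [← ringKrullDim_mvPolynomial_coe (K := K)]
  set I : Ideal (MvPolynomial σ K) := Ideal.span (X '' {a | a ∉ s})
  refine ringKrullDim_le_of_surjective
    (((Ideal.Quotient.mkₐ K I).comp (rename (Subtype.val : s → σ))) : _ →+* _) fun x => ?_
  obtain ⟨f, rfl⟩ := Ideal.Quotient.mkₐ_surjective K I x
  refine ⟨killCompl Subtype.val_injective f, ?_⟩
  have hcomp : ((Ideal.Quotient.mkₐ K I).comp (rename Subtype.val)).comp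
      (killCompl (Subtype.val_injective (p := (· ∈ s)))) = Ideal.Quotient.mkₐ K I := by
    ext a
    by_cases ha : a ∈ s
    · have hX : killCompl Subtype.val_injective (X a : MvPolynomial σ K) = X (⟨a, ha⟩ : s) := by
        rw [← killCompl_rename_app Subtype.val_injective (X ⟨a, ha⟩), rename_X]
      simp [hX]
    · have hmem : (X a : MvPolynomial σ K) ∈ I := Ideal.subset_span ⟨a, ha, rfl⟩
      simp [killCompl, ha, Ideal.Quotient.eq_zero_iff_mem.2 hmem]
  exact DFunLike.congr_fun hcomp f

lemma ringKrullDim_quotient_le_zero {σ : Type*} [Finite σ] {J : Ideal (MvPolynomial σ K)} {N : ℕ}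
    (h : hilb J N = 0) : ringKrullDim (MvPolynomial σ K ⧸ J) ≤ 0 := by
  refine ringKrullDim_quotient_le_of_forall _ _ fun p hp =>
    ⟨_, Ideal.span_le.2 ?_, (ringKrullDim_quotient_span_X_le (∅ : Finset σ)).trans (by simp)⟩
  rintro _ ⟨a, -, rfl⟩
  refine p.2.mem_of_pow_mem N (hp (hilb_eq_zero_iff.1 h _ ?_))
  simpa using (isHomogeneous_X K a).pow N

variable {n d : ℕ} {Γ : Set (Finset ℕ)}

lemma ringKrullDim_quotient_srIdeal_le (hd : ∀ F ∈ Γ, F.card ≤ d) :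
    ringKrullDim (MvPolynomial (Fin n) K ⧸ srIdeal K n Γ) ≤ d := by
  classical
  refine ringKrullDim_quotient_le_of_forall _ _ fun p hp => ?_
  set s : Finset (Fin n) := {a | X a ∉ p.asIdeal}
  have hs : s.map (vertexEmb n) ∈ Γ := by
    by_contra hsΓ
    have hmem : faceMonomial K n (s.map (vertexEmb n)) ∈ p.asIdeal :=
      hp (Ideal.subset_span ⟨_, map_vertexEmb_subset_Icc s, hsΓ, rfl⟩)
    rw [faceMonomial_map_vertexEmb] at hmem
    obtain ⟨a, ha, hap⟩ := p.2.prod_mem_iff.1 hmem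
    exact (Finset.mem_filter.1 ha).2 hap
  refine ⟨_, Ideal.span_le.2 ?_, (ringKrullDim_quotient_span_X_le s).trans ?_⟩
  · rintro _ ⟨a, ha, rfl⟩
    simpa [s] using ha
  · have hcard := hd _ hs
    rw [Finset.card_map] at hcard
    exact_mod_cast hcard

lemma card_le_ringKrullDim_quotient_srIdeal (hΓ : IsLowerSet Γ) {s : Finset (Fin n)}
    (hs : s.map (vertexEmb n) ∈ Γ) :
    s.card ≤ ringKrullDim (MvPolynomial (Fin n) K ⧸ srIdeal K n Γ) := by
  classical
  set φ : MvPolynomial (Fin n) K →ₐ[K] MvPolynomial s K := killCompl Subtype.val_injective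
  have hφ : Function.Surjective φ := fun f =>
    ⟨rename Subtype.val f, killCompl_rename_app Subtype.val_injective f⟩
  have hker : srIdeal K n Γ ≤ RingHom.ker φ := by
    rw [srIdeal, Ideal.span_le]
    rintro _ ⟨F, hF, hFΓ, rfl⟩
    obtain ⟨r, rfl⟩ := exists_map_vertexEmb_eq hF
    obtain ⟨a, har, has⟩ := Finset.not_subset.1
      fun hrs : r ⊆ s => hFΓ (hΓ (Finset.map_subset_map.2 hrs) hs)
    rw [SetLike.mem_coe, RingHom.mem_ker, faceMonomial_map_vertexEmb, map_prod]
    exact Finset.prod_eq_zero har (by simp [φ, killCompl, has])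
  rw [← ringKrullDim_mvPolynomial_coe (K := K)]
  exact ringKrullDim_le_of_surjective _ (Ideal.Quotient.lift_surjective_of_surjective _ hker hφ)

lemma IsComplexOfRank.ringKrullDim_quotient_srIdeal (hΓ : IsComplexOfRank n d Γ) :
    ringKrullDim (MvPolynomial (Fin n) K ⧸ srIdeal K n Γ) = d := by
  refine (ringKrullDim_quotient_srIdeal_le hΓ.card_le).antisymm ?_
  obtain ⟨F, hF, rfl⟩ := hΓ.exists_card_eq
  obtain ⟨s, rfl⟩ := exists_map_vertexEmb_eq (hΓ.subset_Icc F hF)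
  rw [Finset.card_map]
  exact card_le_ringKrullDim_quotient_srIdeal hΓ.isLowerSet hF

end KrullDimension

section GradedPieces

open MvPolynomial

variable {K : Type*} [Field K] {n : ℕ}

instance finite_quotPiece (I : Ideal (MvPolynomial (Fin n) K)) (k : ℕ) :
    Module.Finite K (quotPiece I k) := by
  unfold quotPiece
  infer_instance

lemma quotPiece_eq_bot_iff {I : Ideal (MvPolynomial (Fin n) K)} {k : ℕ} :
    quotPiece I k = ⊥ ↔ hilb I k = 0 := Submodule.finrank_eq_zero.symm

lemma mapsTo_mul_quotPiece (J : Ideal (MvPolynomial (Fin n) K)) {g : MvPolynomial (Fin n) K}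
    {e : ℕ} (hg : g.IsHomogeneous e) (a : ℕ) :
    Set.MapsTo (Ideal.Quotient.mk J g * ·) (quotPiece J a) (quotPiece J (a + e)) := by
  rintro _ ⟨f, hf, rfl⟩
  have hf' : f.IsHomogeneous a := hf
  exact ⟨g * f, add_comm e a ▸ hg.mul hf', map_mul (Ideal.Quotient.mk J) g f⟩

lemma surjOn_mul_quotPiece_iff {J : Ideal (MvPolynomial (Fin n) K)}
    (hJ : J.IsHomogeneous (homogeneousSubmodule (Fin n) K)) {g : MvPolynomial (Fin n) K}
    {e : ℕ} (hg : g.IsHomogeneous e) (a : ℕ) :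
    Set.SurjOn (Ideal.Quotient.mk J g * ·) (quotPiece J a) (quotPiece J (a + e)) ↔
      hilb (J ⊔ Ideal.span {g}) (a + e) = 0 := by
  rw [hilb_eq_zero_iff]
  constructor
  · intro h f hf
    obtain ⟨_, ⟨p, -, rfl⟩, hpf⟩ := h ⟨f, hf, rfl⟩
    have hmem : g * p - f ∈ J := Ideal.Quotient.eq.1 ((map_mul (Ideal.Quotient.mk J) g p).trans hpf)
    rw [← sub_sub_cancel (g * p) f]
    exact sub_mem (Ideal.mem_sup_right (Ideal.mul_mem_right _ _ (Ideal.mem_span_singleton_self g)))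
      (Ideal.mem_sup_left hmem)
  · rintro h _ ⟨f, hf, rfl⟩
    have hfdeg : f ∈ degPart (J ⊔ Ideal.span {g}) (a + e) := ⟨h f hf, hf⟩
    rw [degPart_sup_span_singleton hJ hg] at hfdeg
    obtain ⟨q, hq, _, ⟨p, hp, rfl⟩, rfl⟩ := Submodule.mem_sup.1 hfdeg
    refine ⟨Ideal.Quotient.mk J p, ⟨p, hp, rfl⟩, ?_⟩
    change _ = Ideal.Quotient.mk J (q + p * g)
    rw [map_add, Ideal.Quotient.eq_zero_iff_mem.2 hq.1, zero_add, map_mul, mul_comm]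

lemma bijOn_mul_quotPiece_iff {J : Ideal (MvPolynomial (Fin n) K)}
    (hJ : J.IsHomogeneous (homogeneousSubmodule (Fin n) K)) {g : MvPolynomial (Fin n) K}
    {e : ℕ} (hg : g.IsHomogeneous e) (a : ℕ) :
    Set.BijOn (Ideal.Quotient.mk J g * ·) (quotPiece J a) (quotPiece J (a + e)) ↔
      hilb J a = hilb J (a + e) ∧ hilb (J ⊔ Ideal.span {g}) (a + e) = 0 := by
  have hmaps := mapsTo_mul_quotPiece J hg a
  let φ : quotPiece J a →ₗ[K] quotPiece J (a + e) :=
    (LinearMap.mulLeft K (Ideal.Quotient.mk J g)).restrict hmaps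
  have hinj : Function.Injective φ ↔ _ := hmaps.restrict_inj
  have hsurj : Function.Surjective φ ↔ _ := hmaps.restrict_surjective_iff
  rw [← surjOn_mul_quotPiece_iff hJ hg]
  constructor
  · intro h
    exact ⟨(LinearEquiv.ofBijective φ ⟨hinj.2 h.injOn, hsurj.2 h.surjOn⟩).finrank_eq, h.surjOn⟩
  · rintro ⟨hrank, hs⟩
    have hφ := (LinearMap.injective_iff_surjective_of_finrank_eq_finrank hrank).2 (hsurj.2 hs)
    exact ⟨hmaps, hinj.1 hφ, hs⟩

end GradedPieces

section StrongLefschetz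

open MvPolynomial Filter

variable {σ K : Type*} [Field K]

/-- The linear forms `θ` are a regular sequence on `S/I`, and multiplication by powers of the linear
form `ω` gives `S/(I + (θ))` the strong Lefschetz property with socle degree `s`. All conditions are
expressed through Hilbert functions: `ω ^ (s - 2 * k)` is onto in degree `s - k` if and only if its
cokernel, a graded piece of the quotient by `ω ^ (s - 2 * k)`, vanishes. -/
structure IsLefschetz {d : ℕ} (I : Ideal (MvPolynomial σ K)) (θ : Fin d → MvPolynomial σ K)
    (ω : MvPolynomial σ K) (s : ℕ) : Prop where
  isHomogeneous : ∀ a, (θ a).IsHomogeneous 1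
  isHomogeneous_elem : ω.IsHomogeneous 1
  isHilbertRegular : IsHilbertRegular I θ
  hilb_ne_zero : hilb (I ⊔ Ideal.span (Set.range θ)) s ≠ 0
  hilb_eq_zero : ∀ k, s < k → hilb (I ⊔ Ideal.span (Set.range θ)) k = 0
  hilb_symm : ∀ k, 2 * k ≤ s →
    hilb (I ⊔ Ideal.span (Set.range θ)) k = hilb (I ⊔ Ideal.span (Set.range θ)) (s - k)
  hilb_sup_pow_eq_zero : ∀ k, 2 * k ≤ s →
    hilb (I ⊔ Ideal.span (Set.range θ) ⊔ Ideal.span {ω ^ (s - 2 * k)}) (s - k) = 0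

lemma bijOn_pow_mul_quotPiece_iff {n : ℕ} {J : Ideal (MvPolynomial (Fin n) K)}
    (hJ : J.IsHomogeneous (homogeneousSubmodule (Fin n) K)) {ω : MvPolynomial (Fin n) K}
    (hω : ω.IsHomogeneous 1) {s k : ℕ} (hk : 2 * k ≤ s) :
    Set.BijOn (Ideal.Quotient.mk J ω ^ (s - 2 * k) * ·) (quotPiece J k) (quotPiece J (s - k)) ↔
      hilb J k = hilb J (s - k) ∧ hilb (J ⊔ Ideal.span {ω ^ (s - 2 * k)}) (s - k) = 0 := by
  have hdeg : s - k = k + 1 * (s - 2 * k) := by omega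
  rw [hdeg, ← map_pow, bijOn_mul_quotPiece_iff hJ (hω.pow _)]

section Complexes

variable {n d : ℕ} {Γ : Set (Finset ℕ)}

lemma isHilbertRegular_of_isCMIdeal_srIdeal [Infinite K] (hΓ : IsComplexOfRank n d Γ)
    (h : IsCMIdeal (srIdeal K n Γ)) {θ : Fin d → MvPolynomial (Fin n) K}
    (hθ : ∀ a, (θ a).IsHomogeneous 1) {M : ℕ}
    (hM : hilb (srIdeal K n Γ ⊔ Ideal.span (Set.range θ)) M = 0) :
    IsHilbertRegular (srIdeal K n Γ) θ := by
  obtain ⟨m, hm, θ₀, ⟨hθ₀, -⟩, hreg⟩ := h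
  obtain rfl : d = m := by exact_mod_cast hΓ.ringKrullDim_quotient_srIdeal.symm.trans hm
  have hθ₀reg := (isWeaklyRegular_map_mk_iff (isHomogeneous_srIdeal Γ) hθ₀).1 hreg.toIsWeaklyRegular
  exact hθ₀reg.of_hilb_eq_zero (isHomogeneous_srIdeal Γ) hθ₀ hθ
    (hilb_srIdeal_sup_eq_zero hΓ hθ₀reg d.lt_succ_self) hM

lemma ComplexSLP.exists_isLefschetz [Infinite K] (hΓ : IsComplexOfRank n d Γ)
    (h : ComplexSLP K n d Γ) :
    ∃ (θ : Fin d → MvPolynomial (Fin n) K) (ω : _), IsLefschetz (srIdeal K n Γ) θ ω d := by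
  obtain ⟨hpos, hCM, m, hm, θ, ⟨hθ, -⟩, ω, hω, s, ⟨hs, hs'⟩, hbij⟩ := h
  obtain rfl : d = m := by exact_mod_cast hΓ.ringKrullDim_quotient_srIdeal.symm.trans hm
  have hreg := isHilbertRegular_of_isCMIdeal_srIdeal hΓ hCM hθ
    (quotPiece_eq_bot_iff.1 (hs' (s + 1) s.lt_succ_self))
  have hzero (k : ℕ) (hk : d < k) := hilb_srIdeal_sup_eq_zero hΓ hreg hk
  have hne : hilb (srIdeal K n Γ ⊔ Ideal.span (Set.range θ)) d ≠ 0 := by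
    rw [← hilb_srIdeal_sup_eq_hvec hΓ hreg le_rfl] at hpos
    exact_mod_cast hpos.ne'
  obtain rfl : s = d := le_antisymm
    (not_lt.1 fun hlt => hs (quotPiece_eq_bot_iff.2 (hzero s hlt)))
    (not_lt.1 fun hlt => hne (quotPiece_eq_bot_iff.1 (hs' d hlt)))
  have hJ := isHomogeneous_sup_span_range (isHomogeneous_srIdeal (K := K) (n := n) Γ) hθ
  have hpieces (k : ℕ) (hk : 2 * k ≤ s) := (bijOn_pow_mul_quotPiece_iff hJ hω hk).1 (hbij k hk)
  exact ⟨θ, ω, hθ, hω, hreg, hne, hzero, fun k hk => (hpieces k hk).1, fun k hk => (hpieces k hk).2⟩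

lemma IsLefschetz.complexSLP (hΓ : IsComplexOfRank n d Γ) {θ : Fin d → MvPolynomial (Fin n) K}
    {ω : MvPolynomial (Fin n) K} (h : IsLefschetz (srIdeal K n Γ) θ ω d) : ComplexSLP K n d Γ := by
  have hdim := hΓ.ringKrullDim_quotient_srIdeal (K := K)
  have hI := isHomogeneous_srIdeal (K := K) (n := n) Γ
  have hJ := isHomogeneous_sup_span_range hI h.isHomogeneous
  have hlsop : IsLSOP (srIdeal K n Γ) d θ :=
    ⟨h.isHomogeneous, ringKrullDim_quotient_le_zero (h.hilb_eq_zero (d + 1) d.lt_succ_self)⟩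
  have hpos : 0 < hvec d Γ d := by
    rw [← hilb_srIdeal_sup_eq_hvec hΓ h.isHilbertRegular le_rfl]
    exact_mod_cast Nat.pos_of_ne_zero h.hilb_ne_zero
  have hne : srIdeal K n Γ ⊔ Ideal.span (Set.range θ) ≠ ⊤ := fun htop =>
    h.hilb_ne_zero (htop ▸ hilb_top d)
  have hregular := h.isHilbertRegular.isRegular hI h.isHomogeneous hne
  refine ⟨hpos, ⟨d, hdim, θ, hlsop, hregular⟩, d, hdim, θ, hlsop, ω, h.isHomogeneous_elem, d,
    ⟨?_, fun k hk => quotPiece_eq_bot_iff.2 (h.hilb_eq_zero k hk)⟩, fun k hk =>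
      (bijOn_pow_mul_quotPiece_iff hJ h.isHomogeneous_elem hk).2
        ⟨h.hilb_symm k hk, h.hilb_sup_pow_eq_zero k hk⟩⟩
  exact fun hbot => h.hilb_ne_zero (quotPiece_eq_bot_iff.1 hbot)

end Complexes

variable {I J : Ideal (MvPolynomial σ K)} {d : ℕ} {θ η : Fin d → MvPolynomial σ K}
  {ω υ : MvPolynomial σ K} {s : ℕ}

lemma IsLefschetz.of_span_eq (h : IsLefschetz I θ ω s) (hη : ∀ a, (η a).IsHomogeneous 1)
    (hυ : υ.IsHomogeneous 1) (hθη : Ideal.span (Set.range θ) = Ideal.span (Set.range η))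
    (hωυ : Ideal.span {ω} = Ideal.span {υ}) : IsLefschetz I η υ s := by
  have hpow (k : ℕ) : Ideal.span {υ ^ k} = Ideal.span {ω ^ k} := by
    rw [← Ideal.span_singleton_pow, ← hωυ, Ideal.span_singleton_pow]
  exact ⟨hη, hυ, by rw [IsHilbertRegular, ← hθη]; exact h.isHilbertRegular,
    hθη ▸ h.hilb_ne_zero, hθη ▸ h.hilb_eq_zero, hθη ▸ h.hilb_symm,
    fun k hk => by rw [← hθη, hpow]; exact h.hilb_sup_pow_eq_zero k hk⟩

variable [Finite σ]

lemma hilb_sup_span_range_eq_of_le (hI : I.IsHomogeneous (homogeneousSubmodule σ K))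
    (hθ : ∀ a, (θ a).IsHomogeneous 1) {F : ℕ → ℕ} (hF : hilb I = partialSum^[d] F)
    (hle : hilb (I ⊔ Ideal.span (Set.range θ)) ≤ F) :
    hilb (I ⊔ Ideal.span (Set.range θ)) = F :=
  partialSum_injective.iterate d <|
    (partialSum_mono.iterate d hle).antisymm (hF ▸ hilb_le_iterate_partialSum hI hθ)

lemma IsLefschetz.of_hilb_le (h : IsLefschetz I θ ω s)
    (hJ : J.IsHomogeneous (homogeneousSubmodule σ K)) (hη : ∀ a, (η a).IsHomogeneous 1)
    (hυ : υ.IsHomogeneous 1) (hIJ : hilb I = hilb J)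
    (hle : ∀ k ≤ s + 1,
      hilb (J ⊔ Ideal.span (Set.range η)) k ≤ hilb (I ⊔ Ideal.span (Set.range θ)) k)
    (hle' : ∀ k ≤ s, hilb (J ⊔ Ideal.span (Set.range η) ⊔ Ideal.span {υ ^ (s - 2 * k)}) (s - k) ≤
      hilb (I ⊔ Ideal.span (Set.range θ) ⊔ Ideal.span {ω ^ (s - 2 * k)}) (s - k)) :
    IsLefschetz J η υ s := by
  have hF : hilb J = partialSum^[d] (hilb (I ⊔ Ideal.span (Set.range θ))) :=
    hIJ ▸ h.isHilbertRegular
  have hzero : hilb (J ⊔ Ideal.span (Set.range η)) (s + 1) = 0 :=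
    Nat.le_zero.1 ((hle _ le_rfl).trans_eq (h.hilb_eq_zero _ s.lt_succ_self))
  have heq := hilb_sup_span_range_eq_of_le hJ hη hF fun k => by
    obtain hk | hk := le_or_gt k (s + 1)
    · exact hle k hk
    · exact (hilb_eq_zero_of_le hzero hk.le).trans_le (Nat.zero_le _)
  refine ⟨hη, hυ, by rw [IsHilbertRegular, heq]; exact hF, heq ▸ h.hilb_ne_zero,
    heq ▸ h.hilb_eq_zero, heq ▸ h.hilb_symm, ?_⟩
  exact fun k hk =>
    Nat.le_zero.1 ((hle' k (by omega)).trans_eq (h.hilb_sup_pow_eq_zero k hk))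

lemma IsLefschetz.eventually_add_C_mul (hI : I.IsHomogeneous (homogeneousSubmodule σ K))
    (h : IsLefschetz I θ ω s) (hη : ∀ a, (η a).IsHomogeneous 1) (hυ : υ.IsHomogeneous 1) :
    ∀ᶠ t in cofinite, IsLefschetz I (fun a => θ a + C t * η a) (ω + C t * υ) s := by
  let Q (a : Fin d) := Polynomial.C (θ a) + Polynomial.X * Polynomial.C (η a)
  let P := Polynomial.C ω + Polynomial.X * Polynomial.C υ
  have hQ (a : Fin d) : IsHomFamily 1 (Q a) :=
    (IsHomFamily.const (h.isHomogeneous a)).add (IsHomFamily.const (hη a)).X_mul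
  have hP : IsHomFamily 1 P := (IsHomFamily.const h.isHomogeneous_elem).add
    (IsHomFamily.const hυ).X_mul
  have hparam (k : ℕ) := eventually_hilb_sup_familyIdeal_le hI (𝒬 := Set.range Q)
    (by rintro _ ⟨a, rfl⟩; exact ⟨1, hQ a⟩) k
  have hpow (k : ℕ) := eventually_hilb_sup_familyIdeal_le hI
    (𝒬 := Set.range Q ∪ {P ^ (s - 2 * k)})
    (by rintro _ (⟨a, rfl⟩ | rfl); exacts [⟨1, hQ a⟩, ⟨_, hP.pow _⟩]) (s - k)
  filter_upwards [(eventually_all_finite (Set.finite_Iic (s + 1))).2 fun k _ => hparam k,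
    (eventually_all_finite (Set.finite_Iic s)).2 fun k _ => hpow k] with t ht ht'
  simp only [familyIdeal, Set.image_union, Set.image_singleton, ← Set.range_comp,
    Function.comp_def, Ideal.span_union, ← sup_assoc, Q, P, Polynomial.eval_add,
    Polynomial.eval_mul, Polynomial.eval_pow, Polynomial.eval_C, Polynomial.eval_X, map_zero,
    zero_mul, add_zero, Set.mem_Iic] at ht ht'
  exact h.of_hilb_le hI (fun a => (h.isHomogeneous a).add ((hη a).C_mul t))
    (h.isHomogeneous_elem.add (hυ.C_mul t)) rfl ht ht'

lemma IsLefschetz.exists_common [Infinite K] (hI : I.IsHomogeneous (homogeneousSubmodule σ K))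
    (hJ : J.IsHomogeneous (homogeneousSubmodule σ K)) {r : ℕ} (h : IsLefschetz I θ ω s)
    (h' : IsLefschetz J η υ r) :
    ∃ (ξ : Fin d → MvPolynomial σ K) (ζ : _), IsLefschetz I ξ ζ s ∧ IsLefschetz J ξ ζ r := by
  have hθ := h.isHomogeneous
  have hη := h'.isHomogeneous
  have hω := h.isHomogeneous_elem
  have hυ := h'.isHomogeneous_elem
  obtain ⟨t, hIt, hJt, ht⟩ := ((h.eventually_add_C_mul hI hη hυ).and
    (((inv_injective (G := K)).tendsto_cofinite.eventually
      (h'.eventually_add_C_mul hJ hθ hω)).and (eventually_cofinite_ne 0))).exists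
  refine ⟨_, _, hIt, hJt.of_span_eq hIt.isHomogeneous hIt.isHomogeneous_elem ?_
    (span_add_C_mul ht).symm⟩
  simp only [Ideal.span_range_eq_iSup, span_add_C_mul ht]

end StrongLefschetz

section Gluing

open MvPolynomial

variable {σ K : Type*} [Finite σ] [Field K] {I : Ideal (MvPolynomial σ K)} {x : MvPolynomial σ K}
  {d : ℕ} {θ : Fin d → MvPolynomial σ K} {ω : MvPolynomial σ K} {s : ℕ}

lemma IsLefschetz.cons (hI : I.IsHomogeneous (homogeneousSubmodule σ K))
    (hx : x.IsHomogeneous 1) (hcolon : I.colon {x} ≤ I)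
    (h : IsLefschetz (I ⊔ Ideal.span {x}) θ ω s) :
    IsLefschetz I (Fin.cons x θ : Fin (d + 1) → MvPolynomial σ K) ω s := by
  have hsup := sup_span_range_cons I x θ
  refine ⟨isHomogeneous_cons hx h.isHomogeneous, h.isHomogeneous_elem, ?_, hsup ▸ h.hilb_ne_zero,
    hsup ▸ h.hilb_eq_zero, hsup ▸ h.hilb_symm, hsup ▸ h.hilb_sup_pow_eq_zero⟩
  exact (isHilbertRegular_cons hI hx h.isHomogeneous).2
    ⟨(hilb_eq_partialSum_iff hI hx).2 hcolon, h.isHilbertRegular⟩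

lemma hilb_sup_le {T : Ideal (MvPolynomial σ K)}
    (hI : I.IsHomogeneous (homogeneousSubmodule σ K))
    (hT : T.IsHomogeneous (homogeneousSubmodule σ K)) (hx : x.IsHomogeneous 1) :
    hilb (I ⊔ T) ≤ hilb (I ⊔ Ideal.span {x} ⊔ T) + shiftSeq (hilb (I.colon {x} ⊔ T)) := by
  have hcolon : I.colon {x} ⊔ T ≤ (I ⊔ T).colon {x} :=
    sup_le (Submodule.colon_mono le_sup_left subset_rfl) (le_sup_right.trans Ideal.le_colon)
  rw [hilb_eq_add_shiftSeq (hI.sup hT) hx, sup_right_comm]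
  rintro (_ | k)
  exacts [le_rfl, Nat.add_le_add_left (hilb_anti hcolon k) _]

-- The exact sequence `0 → S/(I : x)(-1) → S/I → S/(I + (x)) → 0`: after the shift by one, both
-- outer terms are symmetric about the same degree `(s + 2) / 2`.
theorem IsLefschetz.of_sup_of_colon (hI : I.IsHomogeneous (homogeneousSubmodule σ K))
    (hx : x.IsHomogeneous 1) (hsup : IsLefschetz (I ⊔ Ideal.span {x}) θ ω (s + 2))
    (hcolon : IsLefschetz (I.colon {x}) θ ω s) : IsLefschetz I θ ω (s + 2) := by
  have hθ := isHomogeneous_span_range hsup.isHomogeneous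
  have hI_eq : hilb I = partialSum^[d] (hilb (I ⊔ Ideal.span {x} ⊔ Ideal.span (Set.range θ)) +
      shiftSeq (hilb (I.colon {x} ⊔ Ideal.span (Set.range θ)))) := by
    rw [iterate_partialSum_add_shiftSeq, ← hsup.isHilbertRegular, ← hcolon.isHilbertRegular]
    exact hilb_eq_add_shiftSeq hI hx
  have heq := hilb_sup_span_range_eq_of_le hI hsup.isHomogeneous hI_eq (hilb_sup_le hI hθ hx)
  refine ⟨hsup.isHomogeneous, hsup.isHomogeneous_elem, hI_eq.trans (by rw [heq]), ?_, ?_, ?_, ?_⟩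
  · rw [heq]
    exact (Nat.add_pos_left (Nat.pos_of_ne_zero hsup.hilb_ne_zero) _).ne'
  · rintro (_ | k) hk
    · omega
    · rw [heq, Pi.add_apply, hsup.hilb_eq_zero _ hk, zero_add]
      exact hcolon.hilb_eq_zero k (by omega)
  · rw [heq]
    rintro (_ | k) hk
    · rw [Pi.add_apply, Pi.add_apply, hsup.hilb_symm 0 hk]
      exact congrArg _ (hcolon.hilb_eq_zero (s + 1) s.lt_succ_self).symm
    · rw [Pi.add_apply, Pi.add_apply, hsup.hilb_symm _ hk,
        show s + 2 - (k + 1) = s - k + 1 by omega]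
      exact congrArg _ (hcolon.hilb_symm k (by omega))
  · intro k hk
    have hle := hilb_sup_le hI
      (hθ.sup (isHomogeneous_span_singleton (hsup.isHomogeneous_elem.pow (s + 2 - 2 * k)))) hx
        (s + 2 - k)
    rw [Pi.add_apply, ← sup_assoc, ← sup_assoc, ← sup_assoc, hsup.hilb_sup_pow_eq_zero k hk,
      zero_add] at hle
    refine Nat.le_zero.1 (hle.trans_eq ?_)
    obtain _ | k := k
    · exact Nat.le_zero.1 ((hilb_anti le_sup_left (s + 1)).trans_eq
        (hcolon.hilb_eq_zero (s + 1) s.lt_succ_self))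
    · rw [show s + 2 - (k + 1) = s - k + 1 by omega, show s + 2 - 2 * (k + 1) = s - 2 * k by omega]
      exact hcolon.hilb_sup_pow_eq_zero k (by omega)

end Gluing

section LinkIdeals

open MvPolynomial

variable {K : Type*} [Field K] {n : ℕ} {Δ : Set (Finset ℕ)}

lemma faceMonomial_mem_srIdeal {F : Finset ℕ} (hF : F ⊆ Finset.Icc 1 n) (h : F ∉ Δ) :
    faceMonomial K n F ∈ srIdeal K n Δ :=
  Ideal.subset_span ⟨F, hF, h, rfl⟩

lemma faceMonomial_insert {F : Finset ℕ} {a : Fin n} (ha : (a : ℕ) + 1 ∉ F) :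
    faceMonomial K n (insert ((a : ℕ) + 1) F) = X a * faceMonomial K n F := by
  have hfilter : (Finset.univ.filter fun b : Fin n => (b : ℕ) + 1 ∈ insert ((a : ℕ) + 1) F) =
      insert a (Finset.univ.filter fun b : Fin n => (b : ℕ) + 1 ∈ F) := by
    ext b
    simp [Fin.ext_iff]
  rw [faceMonomial, hfilter, Finset.prod_insert (by simpa using ha), faceMonomial]

lemma faceMonomial_eq_X_mul_erase {F : Finset ℕ} {a : Fin n} (ha : (a : ℕ) + 1 ∈ F) :
    faceMonomial K n F = X a * faceMonomial K n (F.erase ((a : ℕ) + 1)) := by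
  rw [← faceMonomial_insert (Finset.notMem_erase _ _), Finset.insert_erase ha]

lemma srIdeal_anti : Antitone (srIdeal K n) := by
  intro Γ Δ h
  refine Ideal.span_mono ?_
  rintro _ ⟨F, hF, hFΔ, rfl⟩
  exact ⟨F, hF, fun hFΓ => hFΔ (h hFΓ), rfl⟩

lemma srIdeal_sup_span_X (Δ : Set (Finset ℕ)) (a : Fin n) :
    srIdeal K n Δ ⊔ Ideal.span {X a} = srIdeal K n {F | F ∈ Δ ∧ (a : ℕ) + 1 ∉ F} := by
  apply le_antisymm
  · refine sup_le (srIdeal_anti fun F hF => hF.1) ?_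
    have hX : faceMonomial K n {(a : ℕ) + 1} = X a := by
      simpa [faceMonomial] using faceMonomial_insert (K := K) (Finset.notMem_empty ((a : ℕ) + 1))
    rw [Ideal.span_singleton_le_iff_mem, ← hX]
    exact faceMonomial_mem_srIdeal (by simp) (by simp)
  · refine Ideal.span_le.2 ?_
    rintro _ ⟨F, hF, hFΔ, rfl⟩
    by_cases ha : (a : ℕ) + 1 ∈ F
    · rw [faceMonomial_eq_X_mul_erase ha]
      exact Ideal.mul_mem_right _ _ (Ideal.mem_sup_right (Ideal.mem_span_singleton_self _))
    · exact Ideal.mem_sup_left (faceMonomial_mem_srIdeal hF fun h => hFΔ ⟨h, ha⟩)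

lemma colon_srIdeal_X (hΔ : IsLowerSet Δ) (a : Fin n) :
    (srIdeal K n Δ).colon {X a} = srIdeal K n {F | insert ((a : ℕ) + 1) F ∈ Δ} := by
  have hstar : IsLowerSet {F | insert ((a : ℕ) + 1) F ∈ Δ} :=
    fun F G h hF => hΔ (Finset.insert_subset_insert _ h) hF
  have hsupport (u : Fin n →₀ ℕ) : (Finsupp.single a 1 + u).support.map (vertexEmb n) =
      insert ((a : ℕ) + 1) (u.support.map (vertexEmb n)) := by
    have : (Finsupp.single a 1 + u).support = insert a u.support := by
      ext b
      simp [Finsupp.single_apply]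
      grind
    rw [this, Finset.map_insert]
    rfl
  ext f
  rw [Submodule.mem_colon_singleton, smul_eq_mul, mul_comm, mem_srIdeal hΔ, mem_srIdeal hstar,
    support_X_mul]
  simp only [Finset.mem_map, addLeftEmbedding_apply, forall_exists_index, and_imp,
    forall_apply_eq_imp_iff₂, hsupport, Set.mem_ofPred_eq]

end LinkIdeals

section EdgeShift

variable {Γ : Set (Finset ℕ)} {i j n : ℕ}

lemma isLowerSet_linkOf (hΓ : IsLowerSet Γ) (F : Finset ℕ) : IsLowerSet (linkOf Γ F) :=
  fun _ _ h hF => ⟨hF.1.mono_left h, hΓ (Finset.union_subset_union_left h) hF.2⟩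

lemma mem_contraction (hΓ : IsLowerSet Γ) (hij : i ≠ j) {F : Finset ℕ} :
    F ∈ contraction Γ i j ↔ i ∉ F ∧ (F ∈ Γ ∨ j ∈ F ∧ insert i (F.erase j) ∈ Γ) := by
  constructor
  · rintro (⟨hF, hi⟩ | ⟨G, hG, hi, rfl⟩)
    · exact ⟨hi, Or.inl hF⟩
    · exact ⟨by grind, Or.inr ⟨by grind, hΓ (by grind) hG⟩⟩
  · rintro ⟨hi, hF | ⟨hj, hF⟩⟩
    · exact Or.inl ⟨hF, hi⟩
    · exact Or.inr ⟨_, hF, by grind, by grind⟩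

lemma isLowerSet_contraction (hΓ : IsLowerSet Γ) (hij : i ≠ j) :
    IsLowerSet (contraction Γ i j) := by
  intro F G hGF hF
  rw [mem_contraction hΓ hij] at hF ⊢
  obtain ⟨hi, hF | ⟨_, hF⟩⟩ := hF
  · exact ⟨fun h => hi (hGF h), Or.inl (hΓ hGF hF)⟩
  · refine ⟨fun h => hi (hGF h), ?_⟩
    by_cases hjG : j ∈ G
    · exact Or.inr ⟨hjG, hΓ (by grind) hF⟩
    · exact Or.inl (hΓ (by grind) hF)

lemma subset_Icc_of_mem_contraction (hsub : ∀ F ∈ Γ, F ⊆ Finset.Icc 1 n)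
    (hj : j ∈ Finset.Icc 1 n) : ∀ F ∈ contraction Γ i j, F ⊆ Finset.Icc 1 n := by
  rintro _ (⟨hF, -⟩ | ⟨F, hF, -, rfl⟩)
  · exact hsub _ hF
  · exact Finset.union_subset ((Finset.erase_subset _ _).trans (hsub F hF))
      (Finset.singleton_subset_iff.2 hj)

/-- The star of the edge `{i, j}` in `Γ`, a double cone over the link of `{i, j}`. -/
def edgeStar (Γ : Set (Finset ℕ)) (i j : ℕ) : Set (Finset ℕ) := {F | F ∪ {i, j} ∈ Γ}

lemma isLowerSet_edgeStar (hΓ : IsLowerSet Γ) (i j : ℕ) : IsLowerSet (edgeStar Γ i j) :=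
  fun _ _ h hF => hΓ (Finset.union_subset_union_left h) hF

lemma LinkCondition.mem_edgeStar (h : LinkCondition Γ i j) {F : Finset ℕ} (hi : i ∉ F)
    (hj : j ∉ F) (hiF : insert i F ∈ Γ) (hjF : insert j F ∈ Γ) : F ∈ edgeStar Γ i j := by
  have hlink : F ∈ linkOf Γ {i} ∩ linkOf Γ {j} :=
    ⟨⟨by simpa using hi, by rwa [Finset.union_singleton]⟩,
      ⟨by simpa using hj, by rwa [Finset.union_singleton]⟩⟩
  rw [h] at hlink
  exact hlink.2

lemma mem_edgeStar_iff_of_mem (hΓ : IsLowerSet Γ) (hlc : LinkCondition Γ i j) {F : Finset ℕ}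
    (hi : i ∈ F) :
    F ∈ edgeStar Γ i j ↔ F ∈ Γ ∧ (j ∈ F ∨ insert j (F.erase i) ∈ Γ) := by
  constructor
  · exact fun hF => ⟨hΓ Finset.subset_union_left hF, Or.inr (hΓ (by grind) hF)⟩
  · rintro ⟨hF, hjF⟩
    by_cases hj : j ∈ F
    · rwa [edgeStar, Set.mem_ofPred_eq, Finset.union_eq_left.2 (by grind)]
    · have h := hlc.mem_edgeStar (F.notMem_erase i) (fun h => hj (Finset.mem_of_mem_erase h))
        (by rwa [Finset.insert_erase hi]) (hjF.resolve_left hj)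
      rwa [edgeStar, Set.mem_ofPred_eq, show F ∪ {i, j} = F.erase i ∪ {i, j} by grind]

lemma mem_shiftComplex (hΓ : IsLowerSet Γ) (hlc : LinkCondition Γ i j) {F : Finset ℕ} :
    F ∈ shiftComplex Γ i j ↔ i ∉ F ∧ F ∈ contraction Γ i j ∨ i ∈ F ∧ F ∈ edgeStar Γ i j := by
  have herase {G : Finset ℕ} : G.erase i ∪ {j} = insert j (G.erase i) := Finset.union_singleton ..
  constructor
  · rintro ⟨G, hG, rfl⟩
    rw [shiftMap, herase]
    split_ifs with h
    · exact Or.inl ⟨by grind, Or.inr ⟨G, hG, h.1, herase.symm⟩⟩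
    · by_cases hi : i ∈ G
      · exact Or.inr ⟨hi, (mem_edgeStar_iff_of_mem hΓ hlc hi).2 ⟨hG, by tauto⟩⟩
      · exact Or.inl ⟨hi, Or.inl ⟨hG, hi⟩⟩
  · rintro (⟨hi, hF⟩ | ⟨hi, hF⟩)
    · by_cases hFΓ : F ∈ Γ
      · exact ⟨F, hFΓ, by simp [shiftMap, hi]⟩
      · obtain hF | ⟨G, hG, hiG, rfl⟩ := hF
        · exact absurd hF.1 hFΓ
        · refine ⟨G, hG, if_pos ⟨hiG, fun hjG => hFΓ (hΓ ?_ hG), hFΓ⟩⟩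
          grind
    · rw [mem_edgeStar_iff_of_mem hΓ hlc hi] at hF
      exact ⟨F, hF.1, if_neg (by rw [herase]; tauto)⟩

lemma isLowerSet_shiftComplex (hΓ : IsLowerSet Γ) (hij : i ≠ j) (hlc : LinkCondition Γ i j) :
    IsLowerSet (shiftComplex Γ i j) := by
  intro F G hGF hF
  rw [mem_shiftComplex hΓ hlc] at hF ⊢
  obtain ⟨hi, hF⟩ | ⟨-, hF⟩ := hF
  · exact Or.inl ⟨fun h => hi (hGF h), isLowerSet_contraction hΓ hij hGF hF⟩
  · by_cases hiG : i ∈ G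
    · exact Or.inr ⟨hiG, isLowerSet_edgeStar hΓ i j hGF hF⟩
    · exact Or.inl ⟨hiG, Or.inl ⟨hΓ (hGF.trans Finset.subset_union_left) hF, hiG⟩⟩

lemma subset_Icc_of_mem_shiftComplex (hsub : ∀ F ∈ Γ, F ⊆ Finset.Icc 1 n)
    (hj : j ∈ Finset.Icc 1 n) : ∀ F ∈ shiftComplex Γ i j, F ⊆ Finset.Icc 1 n := by
  rintro _ ⟨F, hF, rfl⟩
  rw [shiftMap]
  split_ifs
  · exact Finset.union_subset ((Finset.erase_subset _ _).trans (hsub F hF))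
      (Finset.singleton_subset_iff.2 hj)
  · exact hsub F hF

lemma card_shiftMap (Γ : Set (Finset ℕ)) (i j : ℕ) (F : Finset ℕ) :
    (shiftMap Γ i j F).card = F.card := by
  rw [shiftMap]
  split_ifs with h
  · rw [Finset.union_singleton,
      Finset.card_insert_of_notMem fun hj => h.2.1 (Finset.mem_of_mem_erase hj),
      Finset.card_erase_add_one h.1]
  · rfl

lemma injOn_shiftMap (Γ : Set (Finset ℕ)) (i j : ℕ) : Set.InjOn (shiftMap Γ i j) Γ := by
  intro F hF G hG h
  rw [shiftMap, shiftMap] at h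
  split_ifs at h with hF' hG' hG'
  · have hcancel {H : Finset ℕ} (hi : i ∈ H) (hj : j ∉ H) :
        insert i ((H.erase i ∪ {j}).erase j) = H := by grind
    rw [← hcancel hF'.1 hF'.2.1, h, hcancel hG'.1 hG'.2.1]
  · exact absurd (h ▸ hG) hF'.2.2
  · exact absurd (h ▸ hF) hG'.2.2
  · exact h

lemma fvec_shiftComplex (Γ : Set (Finset ℕ)) (i j : ℕ) : fvec (shiftComplex Γ i j) = fvec Γ := by
  funext k
  have himage : {F ∈ shiftComplex Γ i j | F.card = k} =
      shiftMap Γ i j '' {F ∈ Γ | F.card = k} := by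
    ext F
    constructor
    · rintro ⟨⟨G, hG, rfl⟩, hk⟩
      exact ⟨G, ⟨hG, card_shiftMap Γ i j G ▸ hk⟩, rfl⟩
    · rintro ⟨G, ⟨hG, hk⟩, rfl⟩
      exact ⟨⟨G, hG, rfl⟩, (card_shiftMap Γ i j G).trans hk⟩
  rw [fvec, himage, ((injOn_shiftMap Γ i j).mono fun F hF => hF.1).ncard_image, fvec]

lemma setOf_mem_shiftComplex_and_notMem (hΓ : IsLowerSet Γ) (hij : i ≠ j)
    (hlc : LinkCondition Γ i j) :
    {F | F ∈ shiftComplex Γ i j ∧ i ∉ F} = contraction Γ i j := by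
  ext F
  rw [Set.mem_ofPred_eq, mem_shiftComplex hΓ hlc]
  refine ⟨fun h => ?_, fun h => ?_⟩
  · obtain ⟨⟨-, hF⟩ | ⟨hi, -⟩, hi'⟩ := h
    exacts [hF, absurd hi hi']
  · have hi := ((mem_contraction hΓ hij).1 h).1
    exact ⟨Or.inl ⟨hi, h⟩, hi⟩

lemma setOf_insert_mem_edgeStar (Γ : Set (Finset ℕ)) {i j l : ℕ} (hl : l = i ∨ l = j) :
    {F | insert l F ∈ edgeStar Γ i j} = edgeStar Γ i j := by
  ext F
  rw [Set.mem_ofPred_eq, edgeStar, Set.mem_ofPred_eq, Set.mem_ofPred_eq,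
    show insert l F ∪ {i, j} = F ∪ {i, j} by grind]

lemma setOf_insert_mem_shiftComplex (hΓ : IsLowerSet Γ) (hlc : LinkCondition Γ i j) :
    {F | insert i F ∈ shiftComplex Γ i j} = edgeStar Γ i j := by
  rw [← setOf_insert_mem_edgeStar Γ (Or.inl rfl)]
  ext F
  simp [mem_shiftComplex hΓ hlc]

lemma linkOf_pair (Γ : Set (Finset ℕ)) (i j : ℕ) :
    linkOf Γ {i, j} = {F | F ∈ {F | F ∈ edgeStar Γ i j ∧ i ∉ F} ∧ j ∉ F} := by
  ext F
  simp only [linkOf, edgeStar, Set.mem_ofPred_eq, Finset.disjoint_insert_right,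
    Finset.disjoint_singleton_right]
  tauto

end EdgeShift

section EdgeShiftLefschetz

lemma val_add_one_ne {n : ℕ} {a b : Fin n} (hab : a ≠ b) : (a : ℕ) + 1 ≠ (b : ℕ) + 1 :=
  (vertexEmb n).injective.ne hab

open MvPolynomial

variable {K : Type*} [Field K] {n d s : ℕ} {Γ : Set (Finset ℕ)} {a b : Fin n}
  {θ : Fin d → MvPolynomial (Fin n) K} {ω : MvPolynomial (Fin n) K}

lemma hilb_srIdeal_shiftComplex (hΓ : IsLowerSet Γ) (hsub : ∀ F ∈ Γ, F ⊆ Finset.Icc 1 n)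
    {i j : ℕ} (hij : i ≠ j) (hj : j ∈ Finset.Icc 1 n) (hlc : LinkCondition Γ i j) :
    hilb (srIdeal K n (shiftComplex Γ i j)) = hilb (srIdeal K n Γ) :=
  hilb_srIdeal_eq_of_fvec_eq (isLowerSet_shiftComplex hΓ hij hlc) hΓ
    (subset_Icc_of_mem_shiftComplex hsub hj) hsub (fvec_shiftComplex Γ i j)

lemma IsLefschetz.srIdeal_edgeStar (hΓ : IsLowerSet Γ) (hab : a ≠ b)
    (h : IsLefschetz (srIdeal K n (linkOf Γ {(a : ℕ) + 1, (b : ℕ) + 1})) θ ω s) :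
    IsLefschetz (srIdeal K n (edgeStar Γ ((a : ℕ) + 1) ((b : ℕ) + 1)))
      (Fin.cons (X a) (Fin.cons (X b) θ : Fin (d + 1) → _) : Fin (d + 2) → _) ω s := by
  have hstar := isLowerSet_edgeStar hΓ ((a : ℕ) + 1) ((b : ℕ) + 1)
  have hdel : IsLowerSet {F | F ∈ edgeStar Γ ((a : ℕ) + 1) ((b : ℕ) + 1) ∧ (a : ℕ) + 1 ∉ F} :=
    fun F G hGF hF => ⟨hstar hGF hF.1, fun hi => hF.2 (hGF hi)⟩
  refine .cons (isHomogeneous_srIdeal _) (isHomogeneous_X _ a) ?_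
    (.cons ((isHomogeneous_srIdeal _).sup (isHomogeneous_span_singleton (isHomogeneous_X _ a)))
      (isHomogeneous_X _ b) ?_ ?_)
  · rw [colon_srIdeal_X hstar, setOf_insert_mem_edgeStar Γ (Or.inl rfl)]
  · rw [srIdeal_sup_span_X, colon_srIdeal_X hdel]
    refine srIdeal_anti fun F hF => ⟨?_, ?_⟩
    · rw [← setOf_insert_mem_edgeStar Γ (Or.inr rfl)] at hF
      exact hF.1
    · simpa [Fin.val_ne_of_ne hab] using hF.2
  · rwa [srIdeal_sup_span_X, srIdeal_sup_span_X, ← linkOf_pair]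

lemma IsLefschetz.srIdeal_shiftComplex (hΓ : IsLowerSet Γ) (hab : a ≠ b)
    (hlc : LinkCondition Γ ((a : ℕ) + 1) ((b : ℕ) + 1))
    (hcontraction :
      IsLefschetz (srIdeal K n (contraction Γ ((a : ℕ) + 1) ((b : ℕ) + 1))) θ ω (s + 2))
    (hstar : IsLefschetz (srIdeal K n (edgeStar Γ ((a : ℕ) + 1) ((b : ℕ) + 1))) θ ω s) :
    IsLefschetz (srIdeal K n (shiftComplex Γ ((a : ℕ) + 1) ((b : ℕ) + 1))) θ ω (s + 2) := by
  refine .of_sup_of_colon (isHomogeneous_srIdeal _) (isHomogeneous_X _ a) ?_ ?_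
  · rwa [srIdeal_sup_span_X, setOf_mem_shiftComplex_and_notMem hΓ (val_add_one_ne hab) hlc]
  · rwa [colon_srIdeal_X (isLowerSet_shiftComplex hΓ (val_add_one_ne hab) hlc),
      setOf_insert_mem_shiftComplex hΓ hlc]

end EdgeShiftLefschetz

section Degeneration

open MvPolynomial

variable {σ K : Type*} [Field K]

lemma hilb_le_hilb_comap [Finite σ] {ψ : MvPolynomial σ K →ₐ[K] MvPolynomial σ K}
    (hψ : Function.Injective ψ) (hhom : ∀ {f k}, f.IsHomogeneous k → (ψ f).IsHomogeneous k)
    (I : Ideal (MvPolynomial σ K)) (k : ℕ) : hilb I k ≤ hilb (I.comap ψ) k := by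
  rw [hilb_le_hilb_iff_finrank_degPart_le]
  have hmaps : ∀ f ∈ degPart (I.comap ψ) k, ψ.toLinearMap f ∈ degPart I k :=
    fun f hf => ⟨hf.1, hhom hf.2⟩
  exact LinearMap.finrank_le_finrank_of_injective (f := ψ.toLinearMap.restrict hmaps)
    fun f g hfg => Subtype.ext (hψ (congrArg Subtype.val hfg))

section EdgeMap

variable [DecidableEq σ] {a b : σ}

/-- The linear change of coordinates `x_a ↦ t x_a`, `x_b ↦ x_a + x_b`; the preimage of the ideal of
`Γ` degenerates to that of `shiftComplex Γ` as `t → 0`. -/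
noncomputable def edgeMap (a b : σ) (t : K) : MvPolynomial σ K →ₐ[K] MvPolynomial σ K :=
  aeval fun c => if c = a then C t * X a else if c = b then X a + X b else X c

lemma edgeMap_X_left (a b : σ) (t : K) : edgeMap a b t (X a) = C t * X a := by
  simp [edgeMap]

lemma edgeMap_X_right (hab : a ≠ b) (t : K) : edgeMap a b t (X b) = X a + X b := by
  simp [edgeMap, hab.symm]

lemma edgeMap_X_of_ne {c : σ} (ha : c ≠ a) (hb : c ≠ b) (t : K) :
    edgeMap a b t (X c) = X c := by
  simp [edgeMap, ha, hb]

lemma edgeMap_injective (hab : a ≠ b) {t : K} (ht : t ≠ 0) :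
    Function.Injective (edgeMap a b t) := by
  let χ : MvPolynomial σ K →ₐ[K] MvPolynomial σ K :=
    aeval fun c => if c = a then C t⁻¹ * X a else if c = b then X b - C t⁻¹ * X a else X c
  have hχ : χ.comp (edgeMap a b t) = AlgHom.id K _ := by
    ext1 c
    rw [AlgHom.comp_apply, AlgHom.id_apply]
    by_cases ha : c = a
    · subst ha
      simp [χ, edgeMap_X_left, algHom_C, ← mul_assoc, ← C_mul, ht]
    by_cases hb : c = b
    · subst hb
      simp [χ, edgeMap_X_right hab, ha]
    · simp [χ, edgeMap_X_of_ne ha hb, ha, hb]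
  exact Function.LeftInverse.injective (g := χ) fun f => DFunLike.congr_fun hχ f

lemma isHomogeneous_edgeMap (a b : σ) (t : K) {f : MvPolynomial σ K} {k : ℕ}
    (hf : f.IsHomogeneous k) : (edgeMap a b t f).IsHomogeneous k := by
  rw [← one_mul k]
  refine hf.aeval _ fun c => ?_
  split_ifs
  · exact (isHomogeneous_X _ _).C_mul _
  · exact (isHomogeneous_X _ _).add (isHomogeneous_X _ _)
  · exact isHomogeneous_X _ _

end EdgeMap

variable {n : ℕ} {Γ : Set (Finset ℕ)} {a b : Fin n} {F : Finset ℕ}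

lemma edgeMap_faceMonomial (ha : (a : ℕ) + 1 ∉ F) (hb : (b : ℕ) + 1 ∉ F) (t : K) :
    edgeMap a b t (faceMonomial K n F) = faceMonomial K n F := by
  rw [faceMonomial, map_prod]
  refine Finset.prod_congr rfl fun c hc => edgeMap_X_of_ne ?_ ?_ t
  · rintro rfl
    exact ha (Finset.mem_filter.1 hc).2
  · rintro rfl
    exact hb (Finset.mem_filter.1 hc).2

lemma exists_isHomogeneous_faceMonomial (F : Finset ℕ) :
    ∃ e, (faceMonomial K n F).IsHomogeneous e :=
  ⟨_, IsHomogeneous.prod _ _ _ fun c _ => isHomogeneous_X _ c⟩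

lemma faceMonomial_erase_dvd_edgeMap (ha : (a : ℕ) + 1 ∉ F) (t : K) :
    faceMonomial K n (F.erase ((b : ℕ) + 1)) ∣ edgeMap a b t (faceMonomial K n F) := by
  by_cases hb : (b : ℕ) + 1 ∈ F
  · have ha' : (a : ℕ) + 1 ∉ F.erase ((b : ℕ) + 1) := fun h => ha (Finset.mem_of_mem_erase h)
    rw [faceMonomial_eq_X_mul_erase hb, map_mul, edgeMap_faceMonomial ha' (F.notMem_erase _)]
    exact dvd_mul_left _ _
  · rw [Finset.erase_eq_of_notMem hb, edgeMap_faceMonomial ha hb]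

lemma edgeMap_faceMonomial_mem_of_notMem_contraction (hΓ : IsLowerSet Γ)
    (hab : a ≠ b) (hF : F ⊆ Finset.Icc 1 n) (ha : (a : ℕ) + 1 ∉ F)
    (h : F ∉ contraction Γ ((a : ℕ) + 1) ((b : ℕ) + 1)) (t : K) :
    edgeMap a b t (faceMonomial K n F) ∈ srIdeal K n Γ := by
  rw [mem_contraction hΓ (val_add_one_ne hab), not_and, not_or, not_and] at h
  have hFΓ : faceMonomial K n F ∈ srIdeal K n Γ := faceMonomial_mem_srIdeal hF (h ha).1
  by_cases hb : (b : ℕ) + 1 ∈ F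
  · have ha' : (a : ℕ) + 1 ∉ F.erase ((b : ℕ) + 1) := fun h => ha (Finset.mem_of_mem_erase h)
    have hswap : faceMonomial K n (insert ((a : ℕ) + 1) (F.erase ((b : ℕ) + 1))) ∈ srIdeal K n Γ :=
      faceMonomial_mem_srIdeal
        (Finset.insert_subset (by simp) ((Finset.erase_subset _ _).trans hF)) ((h ha).2 hb)
    rw [faceMonomial_insert ha'] at hswap
    rw [faceMonomial_eq_X_mul_erase hb] at hFΓ ⊢
    rw [map_mul, edgeMap_faceMonomial ha' (F.notMem_erase _),
      edgeMap_X_right hab, add_mul]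
    exact add_mem hswap hFΓ
  · rwa [edgeMap_faceMonomial ha hb]

lemma edgeMap_faceMonomial_mem_of_erase_notMem (hab : a ≠ b)
    (hF : F ⊆ Finset.Icc 1 n) (ha : (a : ℕ) + 1 ∈ F) (h : F.erase ((b : ℕ) + 1) ∉ Γ) (t : K) :
    edgeMap a b t (faceMonomial K n F) ∈ srIdeal K n Γ := by
  have hdvd : faceMonomial K n (F.erase ((b : ℕ) + 1)) ∣ edgeMap a b t (faceMonomial K n F) := by
    rw [faceMonomial_eq_X_mul_erase ha, map_mul, edgeMap_X_left,
      faceMonomial_eq_X_mul_erase (Finset.mem_erase.2 ⟨val_add_one_ne hab, ha⟩),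
      Finset.erase_right_comm]
    exact mul_dvd_mul (dvd_mul_left _ _) (faceMonomial_erase_dvd_edgeMap (F.notMem_erase _) t)
  exact Ideal.mem_of_dvd _ hdvd
    (faceMonomial_mem_srIdeal ((Finset.erase_subset _ _).trans hF) h)

lemma edgeMap_mul_sub_mem_of_insert_erase_notMem (hab : a ≠ b) (hF : F ⊆ Finset.Icc 1 n)
    (h : insert ((b : ℕ) + 1) (F.erase ((a : ℕ) + 1)) ∉ Γ) (t : K) :
    edgeMap a b t (faceMonomial K n (F.erase ((a : ℕ) + 1)) * (X a - C t * X b)) ∈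
      srIdeal K n Γ := by
  have hdvd : faceMonomial K n (insert ((b : ℕ) + 1) (F.erase ((a : ℕ) + 1))) ∣
      X b * edgeMap a b t (faceMonomial K n (F.erase ((a : ℕ) + 1))) := by
    rw [faceMonomial_eq_X_mul_erase (Finset.mem_insert_self _ _), Finset.erase_insert_eq_erase]
    exact mul_dvd_mul_left _ (faceMonomial_erase_dvd_edgeMap (F.notMem_erase _) t)
  have hmem := Ideal.mem_of_dvd _ hdvd (faceMonomial_mem_srIdeal
    (Finset.insert_subset (by simp) ((Finset.erase_subset _ _).trans hF)) h)
  have hsub : edgeMap a b t (X a - C t * X b) = -C t * X b := by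
    rw [map_sub, map_mul, edgeMap_X_left, edgeMap_X_right hab, algHom_C, algebraMap_eq]
    ring
  rw [map_mul, hsub, mul_comm, mul_assoc]
  exact Ideal.mul_mem_left _ _ hmem

lemma LinkCondition.erase_notMem_or_insert_erase_notMem {i j : ℕ} (hlc : LinkCondition Γ i j)
    (hij : i ≠ j) (hi : i ∈ F) (h : F ∉ edgeStar Γ i j) :
    F.erase j ∉ Γ ∨ insert j (F.erase i) ∉ Γ := by
  by_contra! hmem
  have hstar : (F.erase i).erase j ∈ edgeStar Γ i j :=
    hlc.mem_edgeStar (by simp) (by simp)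
      (by convert hmem.1 using 1; grind)
      (by convert hmem.2 using 1; grind)
  refine h ?_
  rwa [edgeStar, Set.mem_ofPred_eq, show F ∪ {i, j} = (F.erase i).erase j ∪ {i, j} by grind]

lemma exists_isHomFamily_edgeMap_mem (hΓ : IsLowerSet Γ) (hab : a ≠ b)
    (hlc : LinkCondition Γ ((a : ℕ) + 1) ((b : ℕ) + 1)) (hF : F ⊆ Finset.Icc 1 n)
    (h : F ∉ shiftComplex Γ ((a : ℕ) + 1) ((b : ℕ) + 1)) :
    ∃ Q : Polynomial (MvPolynomial (Fin n) K), (∃ e, IsHomFamily e Q) ∧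
      Q.eval 0 = faceMonomial K n F ∧
        ∀ t, edgeMap a b t (Q.eval (C t)) ∈ srIdeal K n Γ := by
  rw [mem_shiftComplex hΓ hlc, not_or, not_and, not_and] at h
  obtain ⟨e, he⟩ := exists_isHomogeneous_faceMonomial (K := K) (n := n) F
  by_cases ha : (a : ℕ) + 1 ∈ F
  · obtain h' | h' := hlc.erase_notMem_or_insert_erase_notMem (val_add_one_ne hab) ha (h.2 ha)
    · exact ⟨Polynomial.C (faceMonomial K n F), ⟨e, .const he⟩, Polynomial.eval_C, fun t => by
        simpa using edgeMap_faceMonomial_mem_of_erase_notMem hab hF ha h' t⟩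
    · obtain ⟨e', he'⟩ := exists_isHomogeneous_faceMonomial (K := K) (n := n)
        (F.erase ((a : ℕ) + 1))
      refine ⟨Polynomial.C (faceMonomial K n (F.erase ((a : ℕ) + 1))) *
        (Polynomial.C (X a) + Polynomial.X * Polynomial.C (-X b)), ⟨e' + 1, ?_⟩, ?_, fun t => ?_⟩
      · exact (IsHomFamily.const he').mul ((IsHomFamily.const (isHomogeneous_X _ a)).add
          (IsHomFamily.const (isHomogeneous_X _ b).neg).X_mul)
      · simp [faceMonomial_eq_X_mul_erase ha, mul_comm]
      · simpa [sub_eq_add_neg] using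
          edgeMap_mul_sub_mem_of_insert_erase_notMem hab hF h' t
  · exact ⟨Polynomial.C (faceMonomial K n F), ⟨e, .const he⟩, Polynomial.eval_C, fun t => by
      simpa using edgeMap_faceMonomial_mem_of_notMem_contraction hΓ hab hF ha (h.1 ha) t⟩

lemma eventually_hilb_sup_map_edgeMap_le (hΓ : IsLowerSet Γ) (hab : a ≠ b)
    (hlc : LinkCondition Γ ((a : ℕ) + 1) ((b : ℕ) + 1)) {T : Ideal (MvPolynomial (Fin n) K)}
    (hT : T.IsHomogeneous (homogeneousSubmodule (Fin n) K)) (k : ℕ) :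
    ∀ᶠ t in Filter.cofinite, hilb (srIdeal K n Γ ⊔ T.map (edgeMap a b t)) k ≤
      hilb (srIdeal K n (shiftComplex Γ ((a : ℕ) + 1) ((b : ℕ) + 1)) ⊔ T) k := by
  let 𝒬 : Set (Polynomial (MvPolynomial (Fin n) K)) :=
    {Q | (∃ e, IsHomFamily e Q) ∧ ∀ t, edgeMap a b t (Q.eval (C t)) ∈ srIdeal K n Γ}
  have hlimit : srIdeal K n (shiftComplex Γ ((a : ℕ) + 1) ((b : ℕ) + 1)) ≤ familyIdeal 𝒬 0 := by
    refine Ideal.span_le.2 ?_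
    rintro _ ⟨F, hF, hFΔ, rfl⟩
    obtain ⟨Q, hQ, hQ0, hQΓ⟩ := exists_isHomFamily_edgeMap_mem (K := K) hΓ hab hlc hF hFΔ
    exact Ideal.subset_span ⟨Q, ⟨hQ, hQΓ⟩, (congrArg Q.eval C_0).trans hQ0⟩
  filter_upwards [eventually_hilb_sup_familyIdeal_le hT (𝒬 := 𝒬) (fun Q hQ => hQ.1) k,
    Filter.eventually_cofinite_ne (0 : K)] with t hle ht
  have hcomap : T ⊔ familyIdeal 𝒬 t ≤
      (srIdeal K n Γ ⊔ T.map (edgeMap a b t)).comap (edgeMap a b t) := by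
    refine sup_le (fun f hf => Ideal.mem_sup_right (Ideal.mem_map_of_mem _ hf)) (Ideal.span_le.2 ?_)
    rintro _ ⟨Q, hQ, rfl⟩
    exact Ideal.mem_sup_left (hQ.2 t)
  calc hilb (srIdeal K n Γ ⊔ T.map (edgeMap a b t)) k
      ≤ hilb ((srIdeal K n Γ ⊔ T.map (edgeMap a b t)).comap (edgeMap a b t)) k :=
        hilb_le_hilb_comap (edgeMap_injective hab ht)
          (isHomogeneous_edgeMap a b t) _ k
    _ ≤ hilb (T ⊔ familyIdeal 𝒬 t) k := hilb_anti hcomap k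
    _ ≤ hilb (T ⊔ familyIdeal 𝒬 0) k := hle
    _ ≤ hilb (srIdeal K n (shiftComplex Γ ((a : ℕ) + 1) ((b : ℕ) + 1)) ⊔ T) k :=
        hilb_anti (sup_comm T _ ▸ sup_le_sup_left hlimit T) k

lemma IsLefschetz.eventually_edgeMap {d s : ℕ} {θ : Fin d → MvPolynomial (Fin n) K}
    {ω : MvPolynomial (Fin n) K} (hΓ : IsLowerSet Γ) (hsub : ∀ F ∈ Γ, F ⊆ Finset.Icc 1 n)
    (hab : a ≠ b) (hlc : LinkCondition Γ ((a : ℕ) + 1) ((b : ℕ) + 1))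
    (h : IsLefschetz (srIdeal K n (shiftComplex Γ ((a : ℕ) + 1) ((b : ℕ) + 1))) θ ω s) :
    ∀ᶠ t in Filter.cofinite,
      IsLefschetz (srIdeal K n Γ) (fun c => edgeMap a b t (θ c)) (edgeMap a b t ω) s := by
  have hθ := isHomogeneous_span_range h.isHomogeneous
  have hmapθ (t : K) : (Ideal.span (Set.range θ)).map (edgeMap a b t) =
      Ideal.span (Set.range fun c => edgeMap a b t (θ c)) := by
    rw [Ideal.map_span, ← Set.range_comp]
    rfl
  have hmapω (t : K) (k : ℕ) : (Ideal.span {ω ^ k}).map (edgeMap a b t) =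
      Ideal.span {edgeMap a b t ω ^ k} := by
    rw [Ideal.map_span, Set.image_singleton, map_pow]
  have hparam := (Set.finite_Iic (s + 1)).eventually_all.2 fun k _ =>
    eventually_hilb_sup_map_edgeMap_le hΓ hab hlc hθ k
  have hpow := (Set.finite_Iic s).eventually_all.2 fun k _ =>
    eventually_hilb_sup_map_edgeMap_le hΓ hab hlc
      (hθ.sup (isHomogeneous_span_singleton (h.isHomogeneous_elem.pow (s - 2 * k)))) (s - k)
  filter_upwards [hparam, hpow] with t ht ht'
  refine h.of_hilb_le (isHomogeneous_srIdeal Γ) (fun c => isHomogeneous_edgeMap a b t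
    (h.isHomogeneous c)) (isHomogeneous_edgeMap a b t h.isHomogeneous_elem)
    (hilb_srIdeal_shiftComplex hΓ hsub (val_add_one_ne hab) (by simp) hlc) ?_ ?_
  · simpa only [hmapθ, Set.mem_Iic] using ht
  · simpa only [Ideal.map_sup, hmapθ, hmapω, sup_assoc, Set.mem_Iic] using ht'

end Degeneration

section LinkAndContraction

variable {n d : ℕ} {Γ : Set (Finset ℕ)}

lemma exists_val_add_one_eq {i : ℕ} (hi : i ∈ Finset.Icc 1 n) : ∃ a : Fin n, (a : ℕ) + 1 = i := by
  obtain ⟨hi, hin⟩ := Finset.mem_Icc.1 hi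
  exact ⟨⟨i - 1, by omega⟩, Nat.sub_add_cancel hi⟩

lemma nonempty_of_hvec_pos {k : ℕ} (h : 0 < hvec d Γ k) : Γ.Nonempty := by
  by_contra! hΓ
  simp [hvec, fvec, hΓ] at h

lemma isComplexOfRank_contraction (hΓ : IsLowerSet Γ) (hsub : ∀ F ∈ Γ, F ⊆ Finset.Icc 1 n)
    {i j : ℕ} (hij : i ≠ j) (hj : j ∈ Finset.Icc 1 n) (hempty : ∅ ∈ Γ)
    (h : sdim (contraction Γ i j) = (d : ℤ) - 1) : IsComplexOfRank n d (contraction Γ i j) :=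
  .of_sdim_eq (isLowerSet_contraction hΓ hij) (subset_Icc_of_mem_contraction hsub hj)
    ⟨∅, Or.inl ⟨hempty, Finset.notMem_empty i⟩⟩ h

lemma IsComplexOfRank.exists_linkOf_pair (hΓ : IsComplexOfRank n d Γ) {i j : ℕ} (hij : i ≠ j)
    (hne : (linkOf Γ {i, j}).Nonempty) (h : sdim (linkOf Γ {i, j}) = (d : ℤ) - 3) :
    ∃ e, d = e + 2 ∧ IsComplexOfRank n e (linkOf Γ {i, j}) := by
  obtain ⟨F, -, hF⟩ := id hne
  have hd : 2 ≤ d := Finset.card_pair hij ▸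
    (Finset.card_le_card Finset.subset_union_right).trans (hΓ.card_le _ hF)
  obtain ⟨e, rfl⟩ := Nat.exists_eq_add_of_le' hd
  refine ⟨e, rfl, .of_sdim_eq (isLowerSet_linkOf hΓ.isLowerSet _) (fun G hG => ?_) hne ?_⟩
  · exact Finset.subset_union_left.trans (hΓ.subset_Icc _ hG.2)
  · rw [h]
    push_cast
    ring

end LinkAndContraction

/-- Proposition 3.1 / 4.5. Let `Γ` be a `(d-1)`-dimensional complex on
`[n]` satisfying the Link condition w.r.t. `{i,j}`, with `dim C_Γ(ij) = d-1` and
`dim lk_Γ({i,j}) = d-3`. If `C_Γ(ij)` and `lk_Γ({i,j})` have the strong Lefschetz property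
over an infinite field `K` (of arbitrary characteristic), then so does `Γ`. -/
theorem stmt7 (K : Type) [Field K] (hK : Infinite K)
    (n d i j : ℕ) (hi : 1 ≤ i) (hij : i < j) (hj : j ≤ n)
    (Γ : Set (Finset ℕ)) (hΓ : SimplicialComplexOn (Finset.Icc 1 n) Γ)
    (hdim : sdim Γ = (d : ℤ) - 1)
    (hlc : LinkCondition Γ i j)
    (hcd : sdim (contraction Γ i j) = (d : ℤ) - 1)
    (hld : sdim (linkOf Γ {i, j}) = (d : ℤ) - 3)
    (h1 : ComplexSLP K n d (contraction Γ i j))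
    (h2 : ComplexSLP K n (d - 2) (linkOf Γ {i, j})) :
    ComplexSLP K n d Γ := by
  obtain ⟨hsub, hvert, hdown⟩ := hΓ
  have hΓ : IsLowerSet Γ := fun F G hGF hF => hdown F hF G hGF
  have hiI : i ∈ Finset.Icc 1 n := Finset.mem_Icc.2 ⟨hi, hij.le.trans hj⟩
  have hjI : j ∈ Finset.Icc 1 n := Finset.mem_Icc.2 ⟨hi.trans hij.le, hj⟩
  have hempty : ∅ ∈ Γ := hΓ (Finset.empty_subset _) (hvert i hiI)
  have hΓd : IsComplexOfRank n d Γ := .of_sdim_eq hΓ hsub ⟨∅, hempty⟩ hdim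
  have hCd := isComplexOfRank_contraction hΓ hsub hij.ne hjI hempty hcd
  obtain ⟨e, rfl, hLe⟩ := hΓd.exists_linkOf_pair hij.ne (nonempty_of_hvec_pos h2.1) hld
  obtain ⟨a, rfl⟩ := exists_val_add_one_eq hiI
  obtain ⟨b, rfl⟩ := exists_val_add_one_eq hjI
  have hab : a ≠ b := by rintro rfl; exact hij.false
  obtain ⟨θ, ω, hC⟩ := h1.exists_isLefschetz hCd
  obtain ⟨η, υ, hL⟩ := h2.exists_isLefschetz hLe
  obtain ⟨ξ, ζ, hCξ, hstarξ⟩ := hC.exists_common (isHomogeneous_srIdeal _)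
    (isHomogeneous_srIdeal _) (hL.srIdeal_edgeStar hΓ hab)
  have hshift := hCξ.srIdeal_shiftComplex hΓ hab hlc hstarξ
  obtain ⟨t, ht⟩ := (hshift.eventually_edgeMap hΓ hsub hab hlc).exists
  exact ht.complexSLP hΓd
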